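/- arXiv:1912.05118 — 2 statements merged into one kernel-verified Lean document; each statement's English description precedes it below -/
import Mathlib

section
/- Let r > r₀ > 0, 0 < k < d, and let P ⊂ ℝ^d be finite with circumradius r₀. Then V_k(conv_r P) ≥ (C(d,k)·ω_d^{1−k/d}/ω_{d−k})·(Vol_d(S_{r,r₀,d}))^{k/d}, where ω_m is the volume of the m-dimensional unit ball. -/
open Metric Set MeasureTheory Pointwise RealInnerProductSpace

variable {d : ℕ}

/-- The `r`-ball body generated by `X`: the intersection of all closed balls of
radius `r` centered at points of `X`. -/
def ballBody (r : ℝ) (X : Set (EuclideanSpace ℝ (Fin d))) :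
    Set (EuclideanSpace ℝ (Fin d)) :=
  ⋂ x ∈ X, closedBall x r

/-- The `r`-ball convex hull of `X`: the intersection of all closed balls of
radius `r` containing `X`. -/
def ballHull (r : ℝ) (X : Set (EuclideanSpace ℝ (Fin d))) :
    Set (EuclideanSpace ℝ (Fin d)) :=
  ⋂ y ∈ {y : EuclideanSpace ℝ (Fin d) | X ⊆ closedBall y r}, closedBall y r

/-- Volume of the m-dimensional unit ball. -/
noncomputable def unitBallVol (m : ℕ) : ℝ :=
  (volume (closedBall (0 : EuclideanSpace ℝ (Fin m)) 1)).toReal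

/-- `V` is a system of intrinsic volumes on `ℝ^d`, i.e. it satisfies the Steiner
formula for all convex bodies. -/
def IsIntrinsicVolumes (d : ℕ)
    (V : ℕ → Set (EuclideanSpace ℝ (Fin d)) → ℝ) : Prop :=
  ∀ A : Set (EuclideanSpace ℝ (Fin d)), Convex ℝ A → IsCompact A → A.Nonempty →
    (∀ ε : ℝ, 0 < ε →
      (volume (A + ε • closedBall (0 : EuclideanSpace ℝ (Fin d)) 1)).toReal =
        ∑ i ∈ Finset.range (d + 1), unitBallVol (d - i) * V i A * ε ^ (d - i)) ∧
    V 0 A = 1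

set_option linter.unusedSectionVars false

section Fibers

variable {E : Type*} [NormedAddCommGroup E] [InnerProductSpace ℝ E] [FiniteDimensional ℝ E]
  [MeasurableSpace E] [BorelSpace E]

/-- The fiber of `X` over `w` in direction `v`. -/
def fib (v : E) (X : Set E) (w : (ℝ ∙ v)ᗮ) : Set ℝ := {t | t • v + (w : E) ∈ X}

lemma mp_decomp (v : E) (hv : ‖v‖ = 1) :
    MeasurePreserving (fun q : ℝ × (ℝ ∙ v)ᗮ => q.1 • v + (q.2 : E)) := by
  have h1 := (ℝ ∙ v).orthogonalDecomposition.symm.measurePreserving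
  have h2 := WithLp.volume_preserving_toLp (ℝ ∙ v) (ℝ ∙ v)ᗮ
  have h3 := (LinearIsometryEquiv.toSpanUnitSingleton (𝕜 := ℝ) v hv).measurePreserving
  have h4 : MeasurePreserving (id : (ℝ ∙ v)ᗮ → (ℝ ∙ v)ᗮ) volume volume := MeasurePreserving.id _
  have h := h1.comp (h2.comp (h3.prod h4))
  convert h using 1
  · ext q
    simp
  · rfl

lemma fib_measurable (v : E) {X : Set E} (hX : MeasurableSet X) (w : (ℝ ∙ v)ᗮ) :
    MeasurableSet (fib v X w) := by
  have : Measurable (fun t : ℝ => t • v + (w : E)) := by fun_prop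
  exact this hX

lemma vol_fib (v : E) (hv : ‖v‖ = 1) {X : Set E} (hX : MeasurableSet X) :
    volume X = ∫⁻ w : (ℝ ∙ v)ᗮ, volume (fib v X w) := by
  have h := mp_decomp v hv
  rw [← h.measure_preimage hX.nullMeasurableSet, Measure.volume_eq_prod,
    Measure.prod_apply_symm (h.measurable hX)]
  rfl

lemma measurable_vol_fib (v : E) {X : Set E} (hX : MeasurableSet X) :
    Measurable (fun w : (ℝ ∙ v)ᗮ => volume (fib v X w)) := by
  have hm : Measurable (fun q : ℝ × (ℝ ∙ v)ᗮ => q.1 • v + (q.2 : E)) := by fun_prop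
  exact measurable_measure_prodMk_right (hm hX)

lemma fib_compact (v : E) (hv : ‖v‖ = 1) {X : Set E} (hX : IsCompact X) (w : (ℝ ∙ v)ᗮ) :
    IsCompact (fib v X w) := by
  have hc : Continuous (fun t : ℝ => t • v + (w : E)) := by fun_prop
  refine Metric.isCompact_of_isClosed_isBounded (hX.isClosed.preimage hc) ?_
  obtain ⟨R, hR⟩ := hX.isBounded.subset_closedBall (0 : E)
  refine (Metric.isBounded_closedBall (x := (0 : ℝ)) (r := R + ‖(w : E)‖)).subset ?_
  intro t ht
  have h1 : t • v + (w : E) ∈ closedBall (0 : E) R := hR ht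
  rw [mem_closedBall_zero_iff] at h1 ⊢
  have h2 : ‖t • v‖ = ‖t‖ := by rw [norm_smul, hv, mul_one]
  have h3 : ‖t • v‖ ≤ ‖t • v + (w : E)‖ + ‖(w : E)‖ := by
    simpa using norm_sub_le (t • v + (w : E)) (w : E)
  linarith

lemma fib_convex (v : E) {X : Set E} (hX : Convex ℝ X) (w : (ℝ ∙ v)ᗮ) :
    Convex ℝ (fib v X w) := by
  intro s hs t ht a b ha hb hab
  have := hX hs ht ha hb hab
  simp only [fib, mem_ofPred_eq] at *
  convert this using 1
  have : (w : E) = a • (w : E) + b • (w : E) := by rw [← add_smul, hab, one_smul]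
  conv_lhs => rw [this]
  simp only [smul_eq_mul, smul_add, add_smul, mul_smul]
  abel

lemma real_convex_compact {I : Set ℝ} (hI : Convex ℝ I) (hc : IsCompact I) (hne : I.Nonempty) :
    ∃ a b, a ≤ b ∧ I = Icc a b := by
  refine ⟨sInf I, sSup I, ?_, ?_⟩
  · exact csInf_le_csSup hne hc.bddBelow hc.bddAbove
  · exact eq_Icc_of_connected_compact ⟨hne, hI.isPreconnected⟩ hc

/-- Structure of the fibers of a convex body. -/
lemma fib_Icc (v : E) (hv : ‖v‖ = 1) {X : Set E} (hX : IsCompact X) (hc : Convex ℝ X)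
    (w : (ℝ ∙ v)ᗮ) : fib v X w = ∅ ∨ ∃ a b, a ≤ b ∧ fib v X w = Icc a b := by
  rcases (fib v X w).eq_empty_or_nonempty with h | h
  · exact Or.inl h
  · exact Or.inr (real_convex_compact (fib_convex v hc w) (fib_compact v hv hX w) h)

lemma decomp_exists (v : E) (x : E) : ∃ (t : ℝ) (w : (ℝ ∙ v)ᗮ), x = t • v + (w : E) := by
  obtain ⟨y, hy, z, hz, rfl⟩ := (ℝ ∙ v).exists_add_mem_mem_orthogonal x
  obtain ⟨t, rfl⟩ := Submodule.mem_span_singleton.1 hy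
  exact ⟨t, ⟨z, hz⟩, rfl⟩

lemma decomp_unique (v : E) (hv : ‖v‖ = 1) {s t : ℝ} {w w' : (ℝ ∙ v)ᗮ}
    (h : s • v + (w : E) = t • v + (w' : E)) : s = t ∧ w = w' := by
  have hw : ⟪v, (w : E)⟫ = 0 := Submodule.mem_orthogonal_singleton_iff_inner_right.1 w.2
  have hw' : ⟪v, (w' : E)⟫ = 0 := Submodule.mem_orthogonal_singleton_iff_inner_right.1 w'.2
  have h1 := congrArg (fun z => ⟪v, z⟫) h
  simp only [inner_add_right, inner_smul_right, hw, hw', real_inner_self_eq_norm_sq, hv] at h1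
  have hst : s = t := by linarith
  subst hst
  exact ⟨rfl, Subtype.ext (add_left_cancel h)⟩

end Fibers

section Segments

variable {E : Type*} [NormedAddCommGroup E] [InnerProductSpace ℝ E] [FiniteDimensional ℝ E]
  [MeasurableSpace E] [BorelSpace E]

/-- The symmetric segment from `-t u` to `t u`. -/
def symSeg (u : E) (t : ℝ) : Set E := (fun a : ℝ => a • u) '' Icc (-t) t

lemma symSeg_compact (u : E) (t : ℝ) : IsCompact (symSeg u t) :=
  isCompact_Icc.image (by fun_prop)

lemma fib_add_symSeg (v : E) (hv : ‖v‖ = 1) (A : Set E) {t : ℝ} {a b : ℝ}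
    (ht : 0 ≤ t) (hab : a ≤ b) (w : (ℝ ∙ v)ᗮ) (hA : fib v A w = Icc a b) :
    fib v (A + symSeg v t) w = Icc (a - t) (b + t) := by
  ext s
  constructor
  · rintro ⟨x, hx, y, ⟨c, hc, rfl⟩, hxy⟩
    have : s - c ∈ fib v A w := by
      show (s - c) • v + (w : E) ∈ A
      convert hx using 1
      simp only at hxy
      rw [sub_smul, sub_add_eq_add_sub, ← hxy]; abel
    rw [hA] at this
    constructor <;> linarith [this.1, this.2, hc.1, hc.2]
  · rintro ⟨h1, h2⟩
    -- choose the point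
    have key : ∃ c ∈ Icc (-t) t, s - c ∈ Icc a b := by
      by_cases h : s < a
      · exact ⟨s - a, ⟨by linarith, by linarith⟩, by constructor <;> linarith⟩
      · by_cases h' : b < s
        · exact ⟨s - b, ⟨by linarith, by linarith⟩, by constructor <;> linarith⟩
        · exact ⟨0, ⟨by linarith, by linarith⟩, by constructor <;> linarith⟩
    obtain ⟨c, hc, hs⟩ := key
    rw [← hA] at hs
    refine ⟨(s - c) • v + w, hs, c • v, ⟨c, hc, rfl⟩, ?_⟩
    simp only [sub_smul]; abel

lemma fib_add_symSeg_empty (v : E) (A : Set E) {t : ℝ}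
    (w : (ℝ ∙ v)ᗮ) (hA : fib v A w = ∅) :
    fib v (A + symSeg v t) w = ∅ := by
  rw [eq_empty_iff_forall_notMem]
  rintro s ⟨x, hx, y, ⟨c, hc, rfl⟩, hxy⟩
  have : s - c ∈ fib v A w := by
    show (s - c) • v + (w : E) ∈ A
    convert hx using 1
    simp only at hxy
    rw [sub_smul, sub_add_eq_add_sub, ← hxy]; abel
  rw [hA] at this
  exact this

lemma shadow_compact (v : E) (hv : ‖v‖ = 1) {A : Set E} (hA : IsCompact A) :
    IsCompact {w : (ℝ ∙ v)ᗮ | (fib v A w).Nonempty} := by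
  have : {w : (ℝ ∙ v)ᗮ | (fib v A w).Nonempty} = (ℝ ∙ v)ᗮ.orthogonalProjectionOnto '' A := by
    ext w
    constructor
    · rintro ⟨t, ht⟩
      refine ⟨_, ht, ?_⟩
      rw [map_add, Submodule.orthogonalProjectionOnto_mem_subspace_eq_self, map_smul,
        Submodule.orthogonalProjectionOnto_orthogonal_apply_eq_zero (Submodule.mem_span_singleton_self v)]
      simp
    · rintro ⟨x, hx, rfl⟩
      obtain ⟨t, w, rfl⟩ := decomp_exists v x
      refine ⟨t, ?_⟩
      show t • v + _ ∈ A
      convert hx using 3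
      rw [map_add, Submodule.orthogonalProjectionOnto_mem_subspace_eq_self, map_smul,
        Submodule.orthogonalProjectionOnto_orthogonal_apply_eq_zero (Submodule.mem_span_singleton_self v)]
      simp
  rw [this]
  exact hA.image (by fun_prop)

lemma vol_add_symSeg_unit (v : E) (hv : ‖v‖ = 1) {A : Set E} (hA : IsCompact A)
    (hc : Convex ℝ A) {t : ℝ} (ht : 0 ≤ t) :
    volume (A + symSeg v t) = volume A +
      ENNReal.ofReal (2 * t) * volume {w : (ℝ ∙ v)ᗮ | (fib v A w).Nonempty} := by
  have hG := (shadow_compact v hv hA).measurableSet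
  rw [vol_fib v hv (hA.add (symSeg_compact v t)).measurableSet, vol_fib v hv hA.measurableSet,
    ← lintegral_indicator_const hG, ← lintegral_add_left (measurable_vol_fib v hA.measurableSet)]
  refine lintegral_congr fun w => ?_
  rcases fib_Icc v hv hA hc w with h | ⟨a, b, hab, h⟩
  · rw [fib_add_symSeg_empty v A w h, indicator_of_notMem, h]
    · simp
    · simp [h]
  · rw [fib_add_symSeg v hv A ht hab w h, indicator_of_mem, h, Real.volume_Icc, Real.volume_Icc,
      ← ENNReal.ofReal_add (by linarith) (by linarith)]
    · congr 1; ring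
    · simp [h, hab]

lemma vol_add_symSeg (u : E) {A : Set E} (hA : IsCompact A) (hc : Convex ℝ A) :
    ∃ c : ℝ, ∀ t : ℝ, 0 ≤ t →
      (volume (A + symSeg u t)).toReal = (volume A).toReal + t * c := by
  by_cases hu : u = 0
  · refine ⟨0, fun t ht => ?_⟩
    have : symSeg u t = {0} := by
      subst hu
      ext x
      simp only [symSeg, smul_zero, mem_image, mem_singleton_iff]
      constructor
      · rintro ⟨_, _, h⟩; exact h.symm
      · rintro h; exact ⟨0, ⟨by linarith, ht⟩, h.symm⟩
    rw [this]; simp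
  · have hl : 0 < ‖u‖ := norm_pos_iff.2 hu
    set v : E := ‖u‖⁻¹ • u with hv
    have hv1 : ‖v‖ = 1 := by rw [hv, norm_smul, norm_inv, norm_norm, inv_mul_cancel₀ hl.ne']
    have huv : u = ‖u‖ • v := by rw [hv, smul_smul, mul_inv_cancel₀ hl.ne', one_smul]
    refine ⟨2 * ‖u‖ * (volume {w : (ℝ ∙ v)ᗮ | (fib v A w).Nonempty}).toReal, fun t ht => ?_⟩
    have hs : symSeg u t = symSeg v (t * ‖u‖) := by
      ext x
      constructor
      · rintro ⟨a, ha, rfl⟩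
        refine ⟨a * ‖u‖, ⟨?_, ?_⟩, ?_⟩
        · rw [← neg_mul]; exact mul_le_mul_of_nonneg_right ha.1 hl.le
        · exact mul_le_mul_of_nonneg_right ha.2 hl.le
        · simp only; rw [mul_smul, ← huv]
      · rintro ⟨a, ha, rfl⟩
        refine ⟨a * ‖u‖⁻¹, ⟨?_, ?_⟩, ?_⟩
        · rw [← div_eq_mul_inv, le_div_iff₀ hl]; linarith [ha.1]
        · rw [← div_eq_mul_inv, div_le_iff₀ hl]; linarith [ha.2]
        · simp only; rw [mul_smul, ← hv]
    have hfin : volume {w : (ℝ ∙ v)ᗮ | (fib v A w).Nonempty} ≠ ⊤ :=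
      (shadow_compact v hv1 hA).measure_lt_top.ne
    rw [hs, vol_add_symSeg_unit v hv1 hA hc (by positivity), ENNReal.toReal_add
      hA.measure_lt_top.ne (ENNReal.mul_ne_top ENNReal.ofReal_ne_top hfin), ENNReal.toReal_mul,
      ENNReal.toReal_ofReal (by positivity)]
    ring

end Segments

section SteinerSym

variable {E : Type*} [NormedAddCommGroup E] [InnerProductSpace ℝ E] [FiniteDimensional ℝ E]
  [MeasurableSpace E] [BorelSpace E]

/-- Reflection in the hyperplane orthogonal to `v`. -/
noncomputable def hrefl (v : E) : E ≃ₗᵢ[ℝ] E := (ℝ ∙ v)ᗮ.reflection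

lemma hrefl_apply (v : E) (t : ℝ) (w : (ℝ ∙ v)ᗮ) :
    hrefl v (t • v + (w : E)) = (-t) • v + (w : E) := by
  unfold hrefl
  rw [map_add, map_smul, Submodule.reflection_orthogonalComplement_singleton_eq_neg,
    Submodule.reflection_mem_subspace_eq_self w.2]
  simp

/-- Steiner symmetrization in direction `v`. -/
def steiner (v : E) (K : Set E) : Set E :=
  {z | ∃ (a b : ℝ) (w : (ℝ ∙ v)ᗮ), a • v + (w : E) ∈ K ∧ b • v + (w : E) ∈ K ∧
    z = ((a - b) / 2) • v + (w : E)}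

lemma fib_steiner (v : E) (hv : ‖v‖ = 1) {K : Set E} (w : (ℝ ∙ v)ᗮ) :
    fib v (steiner v K) w = {s | ∃ a ∈ fib v K w, ∃ b ∈ fib v K w, s = (a - b) / 2} := by
  ext s
  constructor
  · rintro ⟨a, b, w', ha, hb, h⟩
    obtain ⟨rfl, rfl⟩ := decomp_unique v hv h
    exact ⟨a, ha, b, hb, rfl⟩
  · rintro ⟨a, ha, b, hb, rfl⟩
    exact ⟨a, b, w, ha, hb, rfl⟩

lemma fib_steiner_Icc (v : E) (hv : ‖v‖ = 1) {K : Set E} (w : (ℝ ∙ v)ᗮ) {a b : ℝ} (hab : a ≤ b)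
    (h : fib v K w = Icc a b) :
    fib v (steiner v K) w = Icc (-((b - a) / 2)) ((b - a) / 2) := by
  rw [fib_steiner v hv, h]
  ext s
  constructor
  · rintro ⟨x, hx, y, hy, rfl⟩
    constructor <;> linarith [hx.1, hx.2, hy.1, hy.2]
  · rintro ⟨h1, h2⟩
    refine ⟨(a + b) / 2 + s, ⟨by linarith, by linarith⟩, (a + b) / 2 - s,
      ⟨by linarith, by linarith⟩, by ring⟩

lemma fib_steiner_empty (v : E) (hv : ‖v‖ = 1) {K : Set E} (w : (ℝ ∙ v)ᗮ)
    (h : fib v K w = ∅) : fib v (steiner v K) w = ∅ := by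
  rw [fib_steiner v hv, h]
  simp

lemma steiner_convex (v : E) {K : Set E} (hK : Convex ℝ K) : Convex ℝ (steiner v K) := by
  rintro x ⟨a, b, w, ha, hb, rfl⟩ y ⟨a', b', w', ha', hb', rfl⟩ s t hs ht hst
  refine ⟨s * a + t * a', s * b + t * b', s • w + t • w', ?_, ?_, ?_⟩
  · convert hK ha ha' hs ht hst using 1
    push_cast
    module
  · convert hK hb hb' hs ht hst using 1
    push_cast
    module
  · push_cast
    module

lemma steiner_compact (v : E) (hv : ‖v‖ = 1) {K : Set E} (hK : IsCompact K) :
    IsCompact (steiner v K) := by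
  have hcl : IsCompact ((K ×ˢ K) ∩ {q : E × E | (ℝ ∙ v)ᗮ.orthogonalProjectionOnto q.1 =
      (ℝ ∙ v)ᗮ.orthogonalProjectionOnto q.2}) :=
    (hK.prod hK).inter_right (isClosed_eq (by fun_prop) (by fun_prop))
  have hP : ∀ (t : ℝ) (w : (ℝ ∙ v)ᗮ),
      (ℝ ∙ v)ᗮ.orthogonalProjectionOnto (t • v + (w : E)) = w := by
    intro t w
    rw [map_add, Submodule.orthogonalProjectionOnto_mem_subspace_eq_self, map_smul,
        Submodule.orthogonalProjectionOnto_orthogonal_apply_eq_zero (Submodule.mem_span_singleton_self v)]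
    simp
  have hcont : Continuous (fun q : E × E => (1 / 2 : ℝ) • (q.1 + hrefl v q.2)) := by
    have := (hrefl v).continuous
    fun_prop
  have : steiner v K = (fun q : E × E => (1 / 2 : ℝ) • (q.1 + hrefl v q.2)) '' ((K ×ˢ K) ∩
      {q : E × E | (ℝ ∙ v)ᗮ.orthogonalProjectionOnto q.1 =
      (ℝ ∙ v)ᗮ.orthogonalProjectionOnto q.2}) := by
    ext z
    constructor
    · rintro ⟨a, b, w, ha, hb, rfl⟩
      refine ⟨(a • v + (w : E), b • v + (w : E)), ⟨⟨ha, hb⟩, ?_⟩, ?_⟩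
      · show _ = _
        simp only [hP]
      · simp only [hrefl_apply]
        module
    · rintro ⟨⟨x, y⟩, ⟨⟨hx, hy⟩, hxy⟩, rfl⟩
      obtain ⟨a, w, rfl⟩ := decomp_exists v x
      obtain ⟨b, w', rfl⟩ := decomp_exists v y
      have h : w = w' := by
        have : _ = _ := hxy
        simpa only [hP] using this
      subst h
      refine ⟨a, b, w, hx, hy, ?_⟩
      simp only [hrefl_apply]
      module
  rw [this]
  exact hcl.image hcont

lemma steiner_nonempty (v : E) {K : Set E} (hK : K.Nonempty) : (steiner v K).Nonempty := by
  obtain ⟨x, hx⟩ := hK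
  obtain ⟨a, w, rfl⟩ := decomp_exists v x
  exact ⟨_, a, a, w, hx, hx, rfl⟩

lemma steiner_volume (v : E) (hv : ‖v‖ = 1) {K : Set E} (hK : IsCompact K) (hc : Convex ℝ K) :
    volume (steiner v K) = volume K := by
  rw [vol_fib v hv (steiner_compact v hv hK).measurableSet, vol_fib v hv hK.measurableSet]
  refine lintegral_congr fun w => ?_
  rcases fib_Icc v hv hK hc w with h | ⟨a, b, hab, h⟩
  · rw [fib_steiner_empty v hv w h, h]
  · rw [fib_steiner_Icc v hv w hab h, h, Real.volume_Icc, Real.volume_Icc]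
    congr 1; ring

/-- Steiner symmetrization and Minkowski addition of a fixed convex body. -/
lemma steiner_add_volume (v : E) (hv : ‖v‖ = 1) {K Z : Set E} (hK : IsCompact K)
    (hc : Convex ℝ K) (hZ : IsCompact Z) (hZc : Convex ℝ Z) :
    2 * volume (steiner v K + Z) ≤ volume (K + Z) + volume (hrefl v '' K + Z) := by
  have hR : IsCompact (hrefl v '' K) := hK.image (hrefl v).continuous
  have hRc : Convex ℝ (hrefl v '' K) := hc.linear_image (hrefl v).toLinearEquiv.toLinearMap
  have hm1 := ((steiner_compact v hv hK).add hZ).measurableSet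
  have hm2 := (hK.add hZ).measurableSet
  have hm3 := (hR.add hZ).measurableSet
  rw [vol_fib v hv hm1, vol_fib v hv hm2, vol_fib v hv hm3,
    ← lintegral_const_mul _ (measurable_vol_fib v hm1),
    ← lintegral_add_left (measurable_vol_fib v hm2)]
  refine lintegral_mono fun w => ?_
  have key : ∀ s ∈ fib v (steiner v K + Z) w, ∃ s1 ∈ fib v (K + Z) w,
      ∃ s2 ∈ fib v (hrefl v '' K + Z) w, s = (s1 + s2) / 2 := by
    rintro s ⟨x, ⟨a, b, w', ha, hb, rfl⟩, z, hz, hs⟩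
    obtain ⟨c, w'', rfl⟩ := decomp_exists v z
    simp only at hs
    have h2 : s • v + (w : E) = ((a - b) / 2 + c) • v + ((w' + w'' : (ℝ ∙ v)ᗮ) : E) := by
      rw [← hs]; push_cast; module
    obtain ⟨rfl, rfl⟩ := decomp_unique v hv h2
    refine ⟨a + c, ⟨_, ha, _, hz, ?_⟩, -b + c, ⟨_, ⟨_, hb, hrefl_apply v b w'⟩, _, hz, ?_⟩, by ring⟩
    · push_cast; module
    · push_cast; module
  rcases fib_Icc v hv ((steiner_compact v hv hK).add hZ) ((steiner_convex v hc).add hZc) w with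
    h | ⟨a, b, hab, h⟩
  · rw [h]; simp
  · obtain ⟨a1, ha1, a2, ha2, ha⟩ := key a (by rw [h]; exact ⟨le_rfl, hab⟩)
    obtain ⟨b1, hb1, b2, hb2, hb⟩ := key b (by rw [h]; exact ⟨hab, le_rfl⟩)
    have e1 : Icc a1 b1 ⊆ fib v (K + Z) w :=
      (fib_convex v (hc.add hZc) w).ordConnected.out ha1 hb1
    have e2 : Icc a2 b2 ⊆ fib v (hrefl v '' K + Z) w :=
      (fib_convex v (hRc.add hZc) w).ordConnected.out ha2 hb2
    have f1 := measure_mono (μ := volume) e1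
    have f2 := measure_mono (μ := volume) e2
    rw [Real.volume_Icc] at f1 f2
    calc 2 * volume (fib v (steiner v K + Z) w) = ENNReal.ofReal (2 * (b - a)) := by
          rw [h, Real.volume_Icc, ENNReal.ofReal_mul (by norm_num)]; simp
      _ = ENNReal.ofReal ((b1 - a1) + (b2 - a2)) := by congr 1; rw [ha, hb]; ring
      _ ≤ ENNReal.ofReal (b1 - a1) + ENNReal.ofReal (b2 - a2) := ENNReal.ofReal_add_le
      _ ≤ _ := add_le_add f1 f2

lemma fib_closedBall (v : E) (hv : ‖v‖ = 1) {ρ : ℝ} (w : (ℝ ∙ v)ᗮ) {s t : ℝ}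
    (hs : s ∈ fib v (closedBall (0 : E) ρ) w) (hst : |t| ≤ |s|) :
    t ∈ fib v (closedBall (0 : E) ρ) w := by
  have hn : ∀ t : ℝ, ‖t • v + (w : E)‖ ^ 2 = t ^ 2 + ‖(w : E)‖ ^ 2 := by
    intro t
    have hw : ⟪v, (w : E)⟫ = 0 := Submodule.mem_orthogonal_singleton_iff_inner_right.1 w.2
    rw [norm_add_sq_real, norm_smul, hv, inner_smul_left, hw]
    simp
  have hs' : ‖s • v + (w : E)‖ ≤ ρ := by simpa [fib] using hs
  show t • v + (w : E) ∈ closedBall (0 : E) ρ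
  rw [mem_closedBall_zero_iff]
  refine le_trans (abs_le_of_sq_le_sq' ?_ (norm_nonneg _)).2 hs'
  rw [hn, hn]
  have := sq_le_sq.2 hst
  linarith

/-- Fibers of a centered ball are centered. -/
lemma fib_closedBall_Icc (v : E) (hv : ‖v‖ = 1) {ρ : ℝ} (w : (ℝ ∙ v)ᗮ) :
    fib v (closedBall (0 : E) ρ) w = ∅ ∨ ∃ j, 0 ≤ j ∧
      fib v (closedBall (0 : E) ρ) w = Icc (-j) j := by
  rcases fib_Icc v hv (isCompact_closedBall (0 : E) ρ) (convex_closedBall _ _) w with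
    h | ⟨a, b, hab, h⟩
  · exact Or.inl h
  · right
    have ha : a ∈ fib v (closedBall (0 : E) ρ) w := by rw [h]; exact ⟨le_rfl, hab⟩
    have hb : b ∈ fib v (closedBall (0 : E) ρ) w := by rw [h]; exact ⟨hab, le_rfl⟩
    have ha' := fib_closedBall v hv w ha (t := -a) (by simp)
    have hb' := fib_closedBall v hv w hb (t := -b) (by simp)
    rw [h] at ha' hb'
    have : a = -b := by linarith [ha'.2, hb'.1]
    subst this
    exact ⟨b, by linarith, h⟩

lemma interval_ineq {a b j : ℝ} (hab : a ≤ b) (hj : 0 ≤ j) :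
    volume (Icc a b ∩ Icc (-j) j) ≤
      volume (Icc (-((b - a) / 2)) ((b - a) / 2) ∩ Icc (-j) j) := by
  rw [Icc_inter_Icc, Icc_inter_Icc, Real.volume_Icc, Real.volume_Icc]
  apply ENNReal.ofReal_le_ofReal
  show min b j - max a (-j) ≤ min ((b - a) / 2) j - max (-((b - a) / 2)) (-j)
  grind

lemma interval_strict {a b j s t : ℝ} (hab : a ≤ b) (hj : 0 ≤ j) (hs : s ∈ Icc a b)
    (hs' : s ∉ Icc (-j) j) (ht : t ∈ Icc (-j) j) (ht' : t ∉ Icc a b) (hlt : a < b) (hj' : 0 < j) :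
    volume (Icc a b ∩ Icc (-j) j) <
      volume (Icc (-((b - a) / 2)) ((b - a) / 2) ∩ Icc (-j) j) := by
  rw [Icc_inter_Icc, Icc_inter_Icc, Real.volume_Icc, Real.volume_Icc]
  simp only [mem_Icc] at *
  have h1 : min b j - max a (-j) < min ((b - a) / 2) j - max (-((b - a) / 2)) (-j) := by
    grind
  have h2 : 0 < min ((b - a) / 2) j - max (-((b - a) / 2)) (-j) := by
    grind
  exact (ENNReal.ofReal_lt_ofReal_iff h2).2 h1

end SteinerSym

section Strict

variable {E : Type*} [NormedAddCommGroup E] [InnerProductSpace ℝ E] [FiniteDimensional ℝ E]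
  [MeasurableSpace E] [BorelSpace E]

lemma fib_inter (v : E) (X Y : Set E) (w : (ℝ ∙ v)ᗮ) :
    fib v (X ∩ Y) w = fib v X w ∩ fib v Y w := rfl

lemma steiner_inter_ball_strict {L U U' : Set E} (hL : IsCompact L) (hc : Convex ℝ L) {ρ : ℝ}
    (hU : IsOpen U) (hUne : U.Nonempty) (hUL : U ⊆ L) (hUB : Disjoint U (closedBall (0 : E) ρ))
    (hU' : IsOpen U') (hUne' : U'.Nonempty) (hUB' : U' ⊆ closedBall (0 : E) ρ)
    (hUL' : Disjoint U' L) :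
    ∃ v : E, ‖v‖ = 1 ∧ volume (L ∩ closedBall (0 : E) ρ) <
      volume (steiner v L ∩ closedBall (0 : E) ρ) := by
  obtain ⟨x, hx⟩ := hUne
  obtain ⟨y, hy⟩ := hUne'
  have hxy : x - y ≠ 0 := by
    intro h
    rw [sub_eq_zero] at h
    exact Set.disjoint_left.1 hUL' hy (h ▸ hUL hx)
  have hn : 0 < ‖x - y‖ := norm_pos_iff.2 hxy
  set v : E := ‖x - y‖⁻¹ • (x - y) with hvdef
  have hv : ‖v‖ = 1 := by rw [hvdef, norm_smul, norm_inv, norm_norm, inv_mul_cancel₀ hn.ne']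
  have hxyv : x - y = ‖x - y‖ • v := by
    rw [hvdef, smul_smul, mul_inv_cancel₀ hn.ne', one_smul]
  obtain ⟨t, w0, hx0⟩ := decomp_exists v x
  obtain ⟨t', w0', hy0⟩ := decomp_exists v y
  have hww : w0 = w0' := by
    have : t • v + (w0 : E) = (t' + ‖x - y‖) • v + (w0' : E) := by
      rw [← hx0, add_smul, ← hxyv, hy0]; abel_nf
    exact (decomp_unique v hv this).2
  subst hww
  refine ⟨v, hv, ?_⟩
  have hBm : MeasurableSet (closedBall (0 : E) ρ) := isClosed_closedBall.measurableSet
  have hm1 : MeasurableSet (L ∩ closedBall (0 : E) ρ) := hL.measurableSet.inter hBm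
  have hm2 : MeasurableSet (steiner v L ∩ closedBall (0 : E) ρ) :=
    (steiner_compact v hv hL).measurableSet.inter hBm
  have hfin : volume (L ∩ closedBall (0 : E) ρ) ≠ ⊤ :=
    ((measure_mono inter_subset_left).trans_lt hL.measure_lt_top).ne
  rw [vol_fib v hv hm1] at hfin
  rw [vol_fib v hv hm1, vol_fib v hv hm2]
  set W : Set (ℝ ∙ v)ᗮ := {w | t • v + (w : E) ∈ U ∧ t' • v + (w : E) ∈ U'} with hW
  have hWo : IsOpen W := by
    have h1 : Continuous (fun w : (ℝ ∙ v)ᗮ => t • v + (w : E)) := by fun_prop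
    have h2 : Continuous (fun w : (ℝ ∙ v)ᗮ => t' • v + (w : E)) := by fun_prop
    exact (hU.preimage h1).inter (hU'.preimage h2)
  have hW0 : w0 ∈ W := ⟨by rw [← hx0]; exact hx, by rw [← hy0]; exact hy⟩
  refine lintegral_strict_mono_of_ae_le_of_ae_lt_on (measurable_vol_fib v hm2).aemeasurable hfin
    (Filter.Eventually.of_forall fun w => ?_) (s := W) (hWo.measure_pos volume ⟨w0, hW0⟩).ne'
    (Filter.Eventually.of_forall fun w hw => ?_)
  · beta_reduce
    rw [fib_inter, fib_inter]
    rcases fib_Icc v hv hL hc w with h | ⟨a, b, hab, h⟩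
    · rw [h]; simp
    · rcases fib_closedBall_Icc v hv (ρ := ρ) w with h' | ⟨j, hj, h'⟩
      · rw [h']; simp
      · rw [h', h, fib_steiner_Icc v hv w hab h]
        exact interval_ineq hab hj
  · beta_reduce
    rw [fib_inter, fib_inter]
    have hfo : ∀ {O : Set E}, IsOpen O → IsOpen (fib v O w) := by
      intro O hO
      have h1 : Continuous (fun s : ℝ => s • v + (w : E)) := by fun_prop
      exact hO.preimage h1
    have ht1 : t ∈ fib v U w := hw.1
    have ht2 : t' ∈ fib v U' w := hw.2
    have hp1 : 0 < volume (fib v U w) := (hfo hU).measure_pos volume ⟨t, ht1⟩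
    have hp2 : 0 < volume (fib v U' w) := (hfo hU').measure_pos volume ⟨t', ht2⟩
    have hi1 : fib v U w ⊆ fib v L w := fun s hs => hUL hs
    have hi2 : fib v U' w ⊆ fib v (closedBall (0 : E) ρ) w := fun s hs => hUB' hs
    have hn1 : t ∉ fib v (closedBall (0 : E) ρ) w := fun hs => Set.disjoint_left.1 hUB ht1 hs
    have hn2 : t' ∉ fib v L w := fun hs => Set.disjoint_left.1 hUL' ht2 hs
    rcases fib_Icc v hv hL hc w with h | ⟨a, b, hab, h⟩
    · exact absurd (hi1 ht1) (by rw [h]; simp)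
    · rcases fib_closedBall_Icc v hv (ρ := ρ) w with h' | ⟨j, hj, h'⟩
      · exact absurd (hi2 ht2) (by rw [h']; simp)
      · have hp1' := hp1.trans_le (measure_mono hi1)
        have hp2' := hp2.trans_le (measure_mono hi2)
        have hi1' := hi1 ht1
        have hi2' := hi2 ht2
        rw [fib_steiner_Icc v hv w hab h]
        rw [h] at hp1' hi1' hn2 ⊢
        rw [h'] at hp2' hi2' hn1 ⊢
        rw [Real.volume_Icc, ENNReal.ofReal_pos] at hp1' hp2'
        exact interval_strict hab hj hi1' hn1 hi2' hn2 (by linarith) (by linarith)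

end Strict

section MultiAffine

/-- Affine in each variable separately (on the nonnegative orthant). -/
def MultiAff {ι : Type*} [DecidableEq ι] (Q : (ι → ℝ) → ℝ) : Prop :=
  ∀ t : ι → ℝ, (∀ i, 0 ≤ t i) → ∀ i, ∃ c, ∀ s, 0 ≤ s →
    Q (Function.update t i s) = Q (Function.update t i 0) + s * c

lemma MultiAff.update_const {ι : Type*} [DecidableEq ι] {Q : (ι → ℝ) → ℝ} (hQ : MultiAff Q)
    (a : ι) {u : ℝ} (hu : 0 ≤ u) : MultiAff (fun t => Q (Function.update t a u)) := by
  intro t ht i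
  by_cases h : i = a
  · subst h
    exact ⟨0, fun s hs => by simp⟩
  · have ht' : ∀ j, 0 ≤ Function.update t a u j := by
      intro j
      by_cases hj : j = a
      · subst hj; simpa using hu
      · simpa [hj] using ht j
    obtain ⟨c, hc⟩ := hQ (Function.update t a u) ht' i
    refine ⟨c, fun s hs => ?_⟩
    have := hc s hs
    simp only
    rw [Function.update_comm h, Function.update_comm h]
    exact this

lemma MultiAff.expand {ι : Type*} [DecidableEq ι] (J : Finset ι) :
    ∀ Q : (ι → ℝ) → ℝ, MultiAff Q → ∃ c : Finset ι → ℝ, ∀ t : ι → ℝ, (∀ i, 0 ≤ t i) →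
      (∀ i, i ∉ J → t i = 0) → Q t = ∑ I ∈ J.powerset, c I * ∏ i ∈ I, t i := by
  induction J using Finset.induction_on with
  | empty =>
    intro Q hQ
    refine ⟨fun _ => Q 0, fun t ht h0 => ?_⟩
    have : t = 0 := by ext i; exact h0 i (by simp)
    simp [this]
  | insert a J ha ih =>
    intro Q hQ
    obtain ⟨c0, h0⟩ := ih _ (hQ.update_const a le_rfl)
    obtain ⟨c1, h1⟩ := ih _ (hQ.update_const a zero_le_one)
    refine ⟨fun I => if a ∈ I then c1 (I.erase a) - c0 (I.erase a) else c0 I, fun t ht hJ => ?_⟩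
    obtain ⟨c, hc⟩ := hQ t ht a
    have e1 := hc 1 zero_le_one
    have e2 := hc (t a) (ht a)
    rw [Function.update_eq_self] at e2
    have ht0 : ∀ i, 0 ≤ Function.update t a 0 i := by
      intro i
      by_cases hi : i = a
      · subst hi; simp
      · simpa [hi] using ht i
    have hJ0 : ∀ i, i ∉ J → Function.update t a 0 i = 0 := by
      intro i hi
      by_cases hia : i = a
      · subst hia; simp
      · simpa [hia] using hJ i (by simp [hia, hi])
    have f0 := h0 _ ht0 hJ0
    have f1 := h1 _ ht0 hJ0
    simp only [Function.update_idem] at f0 f1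
    rw [e2, show c = Q (Function.update t a 1) - Q (Function.update t a 0) by linarith, f0, f1,
      Finset.sum_powerset_insert ha]
    have g1 : ∀ I ∈ J.powerset, ∏ i ∈ I, Function.update t a 0 i = ∏ i ∈ I, t i := by
      intro I hI
      refine Finset.prod_congr rfl fun i hi => ?_
      have : i ≠ a := fun h => ha (h ▸ Finset.mem_powerset.1 hI hi)
      simp [this]
    have ha' : ∀ I ∈ J.powerset, a ∉ I := fun I hI h => ha (Finset.mem_powerset.1 hI h)
    rw [← Finset.sum_sub_distrib, Finset.mul_sum]
    congr 1
    · refine Finset.sum_congr rfl fun I hI => ?_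
      beta_reduce
      rw [g1 I hI, if_neg (ha' I hI)]
    · refine Finset.sum_congr rfl fun I hI => ?_
      beta_reduce
      rw [g1 I hI, if_pos (Finset.mem_insert_self a I), Finset.erase_insert (ha' I hI),
        Finset.prod_insert (ha' I hI)]
      ring

lemma poly_coeff_nonneg {q : Polynomial ℝ} {n : ℕ} (hd : q.natDegree ≤ n)
    (h : ∀ s : ℝ, 0 ≤ s → 0 ≤ q.eval s) : 0 ≤ q.coeff n := by
  by_contra! hneg
  have hdeg : q.natDegree = n := by
    refine le_antisymm hd (Polynomial.le_natDegree_of_ne_zero hneg.ne)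
  by_cases hn : n = 0
  · subst hn
    have := h 0 le_rfl
    rw [← Polynomial.coeff_zero_eq_eval_zero] at this
    linarith
  · have hlc : q.leadingCoeff ≤ 0 := by rw [Polynomial.leadingCoeff, hdeg]; exact hneg.le
    have hdeg' : 0 < q.degree := by
      rw [← Polynomial.natDegree_pos_iff_degree_pos]; omega
    have ht := q.tendsto_atBot_of_leadingCoeff_nonpos hdeg' hlc
    obtain ⟨s, hs1, hs2⟩ := ((ht.eventually (Filter.eventually_lt_atBot 0)).and
      (Filter.eventually_ge_atTop 0)).exists
    exact absurd (h s hs2) (not_le.2 hs1)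

lemma MultiAff.poly {ι : Type*} [DecidableEq ι] [Fintype ι] {Q : (ι → ℝ) → ℝ} (hQ : MultiAff Q)
    (hpos : ∀ t : ι → ℝ, (∀ i, 0 ≤ t i) → 0 ≤ Q t) :
    ∃ p : Polynomial ℝ, (∀ n, 0 ≤ p.coeff n) ∧ ∀ s : ℝ, 0 ≤ s → Q (fun _ => s) = p.eval s := by
  obtain ⟨c, hc⟩ := MultiAff.expand Finset.univ Q hQ
  have hcn : ∀ J : Finset ι, 0 ≤ c J := by
    intro J
    set q : Polynomial ℝ := ∑ I ∈ J.powerset, Polynomial.C (c I) * Polynomial.X ^ I.card with hq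
    have h1 : q.natDegree ≤ J.card := by
      refine Polynomial.natDegree_sum_le_of_forall_le _ _ fun I hI => ?_
      refine (Polynomial.natDegree_C_mul_X_pow_le _ _).trans ?_
      exact Finset.card_le_card (Finset.mem_powerset.1 hI)
    have h2 : ∀ s : ℝ, 0 ≤ s → 0 ≤ q.eval s := by
      intro s hs
      have h3 := hc (fun i => if i ∈ J then s else 0) (fun i => by split_ifs <;> simp [hs])
        (fun i hi => absurd (Finset.mem_univ i) hi)
      have h4 := hpos (fun i => if i ∈ J then s else 0) (fun i => by split_ifs <;> simp [hs])
      rw [h3] at h4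
      convert h4 using 1
      rw [hq, Polynomial.eval_finset_sum]
      symm
      rw [← Finset.sum_subset (Finset.powerset_mono.2 (Finset.subset_univ J))]
      · refine Finset.sum_congr rfl fun I hI => ?_
        simp only [Polynomial.eval_mul, Polynomial.eval_C, Polynomial.eval_pow, Polynomial.eval_X]
        congr 1
        rw [← Finset.prod_const]
        exact Finset.prod_congr rfl fun i hi => if_pos (Finset.mem_powerset.1 hI hi)
      · intro I _ hI
        rw [Finset.mem_powerset, Finset.not_subset] at hI
        obtain ⟨i, hi, hiJ⟩ := hI
        rw [Finset.prod_eq_zero hi (if_neg hiJ), mul_zero]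
    have h5 := poly_coeff_nonneg h1 h2
    convert h5 using 1
    rw [hq, Polynomial.finset_sum_coeff, Finset.sum_eq_single J]
    · simp
    · intro I hI hIJ
      rw [Polynomial.coeff_C_mul_X_pow, if_neg]
      intro hcard
      exact hIJ (Finset.eq_of_subset_of_card_le (Finset.mem_powerset.1 hI) hcard.le)
    · intro h; exact absurd (Finset.mem_powerset_self J) h
  refine ⟨∑ I ∈ Finset.univ.powerset, Polynomial.C (c I) * Polynomial.X ^ I.card, ?_, ?_⟩
  · intro n
    rw [Polynomial.finset_sum_coeff]
    refine Finset.sum_nonneg fun I _ => ?_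
    rw [Polynomial.coeff_C_mul_X_pow]
    split_ifs
    · exact hcn I
    · exact le_rfl
  · intro s hs
    rw [hc _ (fun _ => hs) (fun i hi => absurd (Finset.mem_univ i) hi), Polynomial.eval_finset_sum]
    simp

end MultiAffine

section Poly
lemma poly_coeff_tendsto {α : Type*} {l : Filter α} {n : ℕ} {p : α → Polynomial ℝ}
    {q : Polynomial ℝ} (hp : ∀ a, (p a).natDegree ≤ n) (hq : q.natDegree ≤ n)
    (h : ∀ s : ℝ, 0 < s → Filter.Tendsto (fun a => (p a).eval s) l (nhds (q.eval s))) (i : ℕ) :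
    Filter.Tendsto (fun a => (p a).coeff i) l (nhds (q.coeff i)) := by
  have key : ∀ f : Polynomial ℝ, f.natDegree ≤ n → f.coeff i =
      ∑ j ∈ Finset.range (n + 1), f.eval ((j : ℝ) + 1) *
        (Lagrange.basis (Finset.range (n + 1)) (fun j : ℕ => (j : ℝ) + 1) j).coeff i := by
    intro f hf
    have h1 : f = Lagrange.interpolate (Finset.range (n + 1)) (fun j : ℕ => (j : ℝ) + 1)
        (fun j => f.eval ((j : ℝ) + 1)) := by
      refine Lagrange.eq_interpolate_of_eval_eq _ ?_ ?_ ?_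
      · intro a _ b _ hab
        simpa using hab
      · refine lt_of_le_of_lt Polynomial.degree_le_natDegree ?_
        rw [Finset.card_range]
        exact_mod_cast Nat.lt_succ_of_le hf
      · intro j _; rfl
    conv_lhs => rw [h1]
    rw [Lagrange.interpolate_apply, Polynomial.finset_sum_coeff]
    simp
  rw [key q hq]
  refine Filter.Tendsto.congr (fun a => (key (p a) (hp a)).symm) ?_
  refine tendsto_finset_sum _ fun j _ => ?_
  exact (h _ (by positivity)).mul_const _

lemma poly_natDegree_le {p : Polynomial ℝ} (hp : ∀ n, 0 ≤ p.coeff n) {M : ℝ} {n : ℕ}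
    (h : ∀ s : ℝ, 0 ≤ s → p.eval s ≤ M * (1 + s) ^ n) : p.natDegree ≤ n := by
  by_contra! hlt
  have hp0 : p ≠ 0 := by rintro rfl; simp at hlt
  set m := p.natDegree with hm
  have hc : 0 < p.coeff m := lt_of_le_of_ne (hp m) (by
    rw [hm]; exact (Polynomial.leadingCoeff_ne_zero.2 hp0).symm)
  have h1 : ∀ s : ℝ, 1 ≤ s → p.coeff m * s ≤ |M| * 2 ^ n := by
    intro s hs
    have hs0 : 0 < s := by linarith
    have h2 : p.coeff m * s ^ m ≤ p.eval s := by
      rw [Polynomial.eval_eq_sum_range]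
      exact Finset.single_le_sum (f := fun i => p.coeff i * s ^ i)
        (fun i _ => mul_nonneg (hp i) (by positivity)) (by simp [hm])
    have h3 : M * (1 + s) ^ n ≤ |M| * (2 ^ n * s ^ n) := by
      rw [← mul_pow]
      refine mul_le_mul (le_abs_self M) ?_ (by positivity) (abs_nonneg M)
      gcongr; linarith
    have h4 : p.coeff m * (s ^ n * s) ≤ p.coeff m * s ^ m := by
      refine mul_le_mul_of_nonneg_left ?_ hc.le
      rw [← pow_succ]
      exact pow_le_pow_right₀ hs hlt
    have h5 : (p.coeff m * s) * s ^ n ≤ (|M| * 2 ^ n) * s ^ n := by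
      nlinarith [h s hs0.le]
    exact le_of_mul_le_mul_right h5 (by positivity)
  have h6 := h1 (max 1 ((|M| * 2 ^ n + 1) / p.coeff m)) (le_max_left _ _)
  have h7 : p.coeff m * ((|M| * 2 ^ n + 1) / p.coeff m) ≤
      p.coeff m * (max 1 ((|M| * 2 ^ n + 1) / p.coeff m)) :=
    mul_le_mul_of_nonneg_left (le_max_right _ _) hc.le
  rw [mul_div_cancel₀ _ hc.ne'] at h7
  linarith
end Poly

section Zono

variable {E : Type*} [NormedAddCommGroup E] [InnerProductSpace ℝ E] [FiniteDimensional ℝ E]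
  [MeasurableSpace E] [BorelSpace E]
variable {ι : Type*} [Fintype ι]

/-- Zonotope. -/
def zono (θ : ι → E) (t : ι → ℝ) : Set E :=
  (fun a : ι → ℝ => ∑ i, a i • θ i) '' Set.pi univ (fun i => Icc (-t i) (t i))

lemma zono_compact (θ : ι → E) (t : ι → ℝ) : IsCompact (zono θ t) :=
  (isCompact_univ_pi fun _ => isCompact_Icc).image (by fun_prop)

lemma zono_convex (θ : ι → E) (t : ι → ℝ) : Convex ℝ (zono θ t) := by
  have : IsLinearMap ℝ (fun a : ι → ℝ => ∑ i, a i • θ i) :=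
    { map_add := fun a b => by simp [add_smul, Finset.sum_add_distrib]
      map_smul := fun c a => by simp [Finset.smul_sum, mul_smul] }
  exact Convex.is_linear_image (convex_pi fun _ _ => convex_Icc _ _) this

variable [DecidableEq ι]

lemma zono_update (θ : ι → E) (t : ι → ℝ) (i : ι) {s : ℝ} (hs : 0 ≤ s) :
    zono θ (Function.update t i s) = zono θ (Function.update t i 0) + symSeg (θ i) s := by
  have hsum : ∀ (a : ι → ℝ) (b : ℝ), ∑ j, Function.update a i b j • θ j =
      (∑ j ∈ Finset.univ.erase i, a j • θ j) + b • θ i := by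
    intro a b
    rw [← Finset.sum_erase_add _ _ (Finset.mem_univ i)]
    congr 1
    · refine Finset.sum_congr rfl fun j hj => ?_
      rw [Function.update_of_ne (Finset.ne_of_mem_erase hj)]
    · simp
  ext x
  simp only [zono, symSeg, mem_image, Set.mem_add, mem_univ_pi]
  constructor
  · rintro ⟨a, ha, rfl⟩
    refine ⟨_, ⟨Function.update a i 0, fun j => ?_, rfl⟩, _, ⟨a i, ?_, rfl⟩, ?_⟩
    · by_cases hj : j = i
      · subst hj; simp
      · simpa [hj] using ha j
    · simpa using ha i
    · conv_rhs => rw [show a = Function.update a i (a i) by simp, hsum]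
      rw [hsum]; simp
  · rintro ⟨_, ⟨a, ha, rfl⟩, _, ⟨b, hb, rfl⟩, rfl⟩
    refine ⟨Function.update a i b, fun j => ?_, ?_⟩
    · by_cases hj : j = i
      · subst hj; simpa using hb
      · simpa [hj] using ha j
    · have h0 : a i = 0 := by
        have := ha i
        simpa using this
      rw [hsum]
      conv_rhs => rw [show a = Function.update a i (a i) by simp, hsum]
      rw [h0]; simp

lemma zono_multiAff (θ : ι → E) {K : Set E} (hK : IsCompact K) (hc : Convex ℝ K) :
    MultiAff (fun t => (volume (K + zono θ t)).toReal) := by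
  intro t ht i
  obtain ⟨c, h⟩ := vol_add_symSeg (θ i) (hK.add (zono_compact θ (Function.update t i 0)))
    (hc.add (zono_convex θ (Function.update t i 0)))
  refine ⟨c, fun s hs => ?_⟩
  beta_reduce
  rw [zono_update θ t i hs, ← add_assoc]
  exact h s hs

lemma zono_subset_ball (θ : ι → E) : ∃ R, 0 ≤ R ∧ ∀ s, 0 ≤ s →
    zono θ (fun _ => s) ⊆ closedBall 0 (R * s) := by
  refine ⟨∑ i, ‖θ i‖, Finset.sum_nonneg fun _ _ => norm_nonneg _, fun s hs => ?_⟩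
  rintro _ ⟨a, ha, rfl⟩
  rw [mem_closedBall_zero_iff]
  refine (norm_sum_le _ _).trans ?_
  rw [Finset.sum_mul]
  refine Finset.sum_le_sum fun i _ => ?_
  rw [norm_smul, mul_comm]
  refine mul_le_mul_of_nonneg_left ?_ (norm_nonneg _)
  rw [Real.norm_eq_abs]
  exact abs_le.2 (ha i (mem_univ i))

lemma closedBall_add_subset {X Y : Set E} {a b : ℝ} (hX : X ⊆ closedBall 0 a)
    (hY : Y ⊆ closedBall 0 b) : X + Y ⊆ closedBall 0 (a + b) := by
  rintro _ ⟨x, hx, y, hy, rfl⟩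
  have h1 := mem_closedBall_zero_iff.1 (hX hx)
  have h2 := mem_closedBall_zero_iff.1 (hY hy)
  exact mem_closedBall_zero_iff.2 ((norm_add_le x y).trans (by linarith))

lemma vol_le_ball [Nontrivial E] {X : Set E} {a : ℝ} (ha : 0 ≤ a) (hX : X ⊆ closedBall 0 a) :
    (volume X).toReal ≤ a ^ Module.finrank ℝ E * (volume (closedBall (0 : E) 1)).toReal := by
  have h1 := measure_mono (μ := volume) hX
  rw [Measure.addHaar_closedBall' volume (0:E) ha] at h1
  have := ENNReal.toReal_mono (by
    exact ENNReal.mul_ne_top ENNReal.ofReal_ne_top (isCompact_closedBall (0:E) 1).measure_lt_top.ne) h1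
  rwa [ENNReal.toReal_mul, ENNReal.toReal_ofReal (by positivity)] at this

lemma hrefl_image_convex (v : E) {K : Set E} (hc : Convex ℝ K) : Convex ℝ (hrefl v '' K) :=
  hc.is_linear_image (hrefl v).toLinearEquiv.toLinearMap.isLinear

lemma hrefl_image_compact (v : E) {K : Set E} (hK : IsCompact K) : IsCompact (hrefl v '' K) :=
  hK.image (hrefl v).continuous

/-- the zonotope Steiner polynomial difference. -/
lemma zono_diff_poly [Nontrivial E] (θ : ι → E) (v : E) (hv : ‖v‖ = 1) {K : Set E} (hK : IsCompact K)
    (hc : Convex ℝ K) : ∃ p : Polynomial ℝ, (∀ n, 0 ≤ p.coeff n) ∧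
      p.natDegree ≤ Module.finrank ℝ E ∧ ∀ s : ℝ, 0 ≤ s →
      (volume (K + zono θ (fun _ => s))).toReal + (volume (hrefl v '' K + zono θ (fun _ => s))).toReal
        - 2 * (volume (steiner v K + zono θ (fun _ => s))).toReal = p.eval s := by
  have hm1 := zono_multiAff θ hK hc
  have hm2 := zono_multiAff θ (hrefl_image_compact v hK) (hrefl_image_convex v hc)
  have hm3 := zono_multiAff θ (steiner_compact v hv hK) (steiner_convex v hc)
  have hm : MultiAff (fun t => (volume (K + zono θ t)).toReal
      + (volume (hrefl v '' K + zono θ t)).toReal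
        - 2 * (volume (steiner v K + zono θ t)).toReal) := by
    intro t ht i
    obtain ⟨c1, h1⟩ := hm1 t ht i
    obtain ⟨c2, h2⟩ := hm2 t ht i
    obtain ⟨c3, h3⟩ := hm3 t ht i
    refine ⟨c1 + c2 - 2 * c3, fun s hs => ?_⟩
    have h1 := h1 s hs
    have h2 := h2 s hs
    have h3 := h3 s hs
    beta_reduce at h1 h2 h3 ⊢
    rw [h1, h2, h3]; ring
  have hfin : ∀ {X : Set E}, IsCompact X → ∀ t, volume (X + zono θ t) ≠ ⊤ := fun hX t =>
    (hX.add (zono_compact θ t)).measure_lt_top.ne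
  have hpos : ∀ t : ι → ℝ, (∀ i, 0 ≤ t i) → 0 ≤ (volume (K + zono θ t)).toReal
      + (volume (hrefl v '' K + zono θ t)).toReal
        - 2 * (volume (steiner v K + zono θ t)).toReal := by
    intro t _
    have h := steiner_add_volume v hv hK hc (zono_compact θ t) (zono_convex θ t)
    have h' := ENNReal.toReal_mono (ENNReal.add_ne_top.2
      ⟨hfin hK t, hfin (hrefl_image_compact v hK) t⟩) h
    rw [ENNReal.toReal_mul, ENNReal.toReal_add (hfin hK t) (hfin (hrefl_image_compact v hK) t)] at h'
    simp at h'
    linarith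
  obtain ⟨p, hp1, hp2⟩ := hm.poly hpos
  refine ⟨p, hp1, ?_, hp2⟩
  obtain ⟨R, hR, hz⟩ := zono_subset_ball θ
  obtain ⟨R', hR'⟩ := hK.isBounded.subset_closedBall (0 : E)
  set S := max (max R R') 0 with hS
  have hS0 : 0 ≤ S := le_max_right _ _
  have hSR : R ≤ S := (le_max_left R R').trans (le_max_left _ _)
  have hSR' : R' ≤ S := (le_max_right R R').trans (le_max_left _ _)
  have hK1 : K ⊆ closedBall 0 S := hR'.trans (closedBall_subset_closedBall hSR')
  have hK2 : hrefl v '' K ⊆ closedBall 0 S := by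
    rintro _ ⟨x, hx, rfl⟩
    have := mem_closedBall_zero_iff.1 (hK1 hx)
    rw [mem_closedBall_zero_iff, LinearIsometryEquiv.norm_map]; exact this
  refine poly_natDegree_le hp1 (M := 2 * (S ^ Module.finrank ℝ E *
    (volume (closedBall (0 : E) 1)).toReal)) (fun s hs => ?_)
  rw [← hp2 s hs]
  have hzs : zono θ (fun _ => s) ⊆ closedBall 0 (S * s) :=
    (hz s hs).trans (closedBall_subset_closedBall (by gcongr))
  have b1 := vol_le_ball (by positivity) (closedBall_add_subset hK1 hzs)
  have b2 := vol_le_ball (by positivity) (closedBall_add_subset hK2 hzs)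
  rw [show S + S * s = S * (1 + s) by ring, mul_pow] at b1 b2
  have b3 : 0 ≤ (volume (steiner v K + zono θ (fun _ => s))).toReal := ENNReal.toReal_nonneg
  nlinarith

end Zono

section BallZono

variable {E : Type*} [NormedAddCommGroup E] [InnerProductSpace ℝ E] [FiniteDimensional ℝ E]
  [MeasurableSpace E] [BorelSpace E]

lemma zono_ball [Nontrivial E] {ι : Type*} [Fintype ι] (θ : ι → E) {a b : ℝ}
    (ha : ∀ u : E, a * ‖u‖ ≤ ∑ i, |⟪θ i, u⟫|) (hb : ∀ u : E, ∑ i, |⟪θ i, u⟫| ≤ b * ‖u‖)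
    {s : ℝ} (hs : 0 ≤ s) :
    closedBall 0 (s * a) ⊆ zono θ (fun _ => s) ∧ zono θ (fun _ => s) ⊆ closedBall 0 (s * b) := by
  constructor
  · intro z hz
    rw [mem_closedBall_zero_iff] at hz
    by_contra hzn
    obtain ⟨f, c, h1, h2⟩ := geometric_hahn_banach_closed_point (zono_convex θ _)
      (zono_compact θ _).isClosed hzn
    obtain ⟨w, rfl⟩ := (InnerProductSpace.toDual ℝ E).surjective f
    simp only [InnerProductSpace.toDual_apply_apply] at h1 h2
    have h3 := h1 (∑ i, (s * SignType.sign ⟪θ i, w⟫ : ℝ) • θ i) ⟨_, fun i _ => ?_, rfl⟩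
    · have h4 : ⟪w, ∑ i, (s * SignType.sign ⟪θ i, w⟫ : ℝ) • θ i⟫ = s * ∑ i, |⟪θ i, w⟫| := by
        rw [inner_sum, Finset.mul_sum]
        refine Finset.sum_congr rfl fun i _ => ?_
        rw [inner_smul_right, real_inner_comm, mul_assoc, sign_mul_self]
      rw [h4] at h3
      have h5 := mul_le_mul_of_nonneg_left (ha w) hs
      have h6 := real_inner_le_norm w z
      nlinarith [norm_nonneg w]
    · rcases lt_trichotomy ⟪θ i, w⟫ 0 with h | h | h
      · simp [h, hs]
      · simp [h, hs]
      · simp [h, hs]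
  · rintro z ⟨x, hx, hz⟩
    rw [mem_closedBall_zero_iff]
    by_cases h0 : ‖z‖ = 0
    · have : z = 0 := norm_eq_zero.1 h0
      subst this
      obtain ⟨u, hu⟩ := exists_ne (0 : E)
      have h1 := hb u
      have h2 : 0 ≤ b * ‖u‖ := (Finset.sum_nonneg fun i _ => abs_nonneg _).trans h1
      have h3 : 0 ≤ b := nonneg_of_mul_nonneg_left h2 (norm_pos_iff.2 hu)
      simpa using mul_nonneg hs h3
    have hpos : 0 < ‖z‖ := lt_of_le_of_ne (norm_nonneg _) (Ne.symm h0)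
    have h1 : ⟪z, z⟫ ≤ s * (b * ‖z‖) := by
      calc ⟪z, z⟫ = ∑ i, x i * ⟪θ i, z⟫ := by
            conv_lhs => rw [← hz]
            rw [sum_inner]
            refine Finset.sum_congr rfl fun i _ => ?_
            rw [real_inner_smul_left, hz]
        _ ≤ ∑ i, s * |⟪θ i, z⟫| := by
            refine Finset.sum_le_sum fun i _ => ?_
            refine (le_abs_self _).trans ?_
            rw [abs_mul]
            exact mul_le_mul_of_nonneg_right (abs_le.2 (hx i (mem_univ i))) (abs_nonneg _)
        _ = s * ∑ i, |⟪θ i, z⟫| := by rw [Finset.mul_sum]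
        _ ≤ _ := mul_le_mul_of_nonneg_left (hb z) hs
    rw [real_inner_self_eq_norm_sq] at h1
    nlinarith

/-- mean width type integral -/
noncomputable def gball (u : E) : ℝ := ∫ x in closedBall (0 : E) 1, |⟪x, u⟫|

lemma gball_iso (e : E ≃ₗᵢ[ℝ] E) (u : E) : gball (e u) = gball u := by
  unfold gball
  have hpre : e ⁻¹' (closedBall (0 : E) 1) = closedBall (0 : E) 1 := by
    ext x; simp
  have := e.measurePreserving.setIntegral_preimage_emb
    e.toHomeomorph.measurableEmbedding (fun x : E => |⟪x, e u⟫|) (closedBall 0 1)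
  rw [← this, hpre]
  simp

lemma gball_eq [Nontrivial E] : ∃ c : ℝ, 0 < c ∧ ∀ u : E, gball u = c * ‖u‖ := by
  obtain ⟨u0, hu0⟩ := exists_norm_eq E (zero_le_one' ℝ)
  have hhom : ∀ (a : ℝ) (u : E), 0 ≤ a → gball (a • u) = a * gball u := by
    intro a u ha
    unfold gball
    rw [← integral_const_mul]
    congr 1
    ext x
    rw [inner_smul_right, abs_mul, abs_of_nonneg ha]
  refine ⟨gball u0, ?_, fun u => ?_⟩
  · unfold gball
    have hcont : Continuous (fun x : E => |⟪x, u0⟫|) := by fun_prop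
    rw [setIntegral_pos_iff_support_of_nonneg_ae (Filter.Eventually.of_forall fun x => abs_nonneg _)
      (hcont.continuousOn.integrableOn_compact (isCompact_closedBall _ _))]
    have hopen : IsOpen ({x : E | 0 < ⟪x, u0⟫} ∩ ball 0 1) :=
      (isOpen_lt continuous_const (by fun_prop)).inter isOpen_ball
    refine (hopen.measure_pos volume ⟨(1/2 : ℝ) • u0, ?_, ?_⟩).trans_le (measure_mono ?_)
    · simp [real_inner_smul_left, hu0]
    · rw [mem_ball_zero_iff, norm_smul, hu0]; norm_num
    · rintro x ⟨h1, h2⟩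
      refine ⟨?_, ball_subset_closedBall h2⟩
      simp only [Function.mem_support, ne_eq, abs_eq_zero]
      exact (ne_of_gt h1)
  · by_cases hu : u = 0
    · subst hu; simp [gball]
    have hn : ‖u‖ ≠ 0 := norm_ne_zero_iff.2 hu
    have h1 : ‖‖u‖⁻¹ • u‖ = ‖u0‖ := by
      rw [norm_smul, norm_inv, norm_norm, hu0, inv_mul_cancel₀ hn]
    have h2 : gball (‖u‖⁻¹ • u) = gball u0 := by
      have := gball_iso (hrefl (‖u‖⁻¹ • u - u0)) (‖u‖⁻¹ • u)
      rw [← this]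
      unfold hrefl
      rw [Submodule.reflection_sub h1]
    rw [hhom _ _ (by positivity)] at h2
    rw [← h2]; field_simp

lemma exists_zono_ball [Nontrivial E] {δ : ℝ} (hδ : 0 < δ) :
    ∃ (F : Finset E) (θ : F → E), ∀ s : ℝ, 0 ≤ s →
      closedBall 0 (s * (1 - δ)) ⊆ zono θ (fun _ => s) ∧
      zono θ (fun _ => s) ⊆ closedBall 0 (s * (1 + δ)) := by
  obtain ⟨c, hc, hg⟩ := gball_eq (E := E)
  set μ : Measure E := volume.restrict (closedBall (0 : E) 1) with hμ
  haveI : IsFiniteMeasure μ := ⟨by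
    rw [hμ, Measure.restrict_apply_univ]; exact (isCompact_closedBall _ _).measure_lt_top⟩
  have hid : Integrable (fun x : E => x) μ :=
    (continuous_id.continuousOn (s := closedBall (0 : E) 1)).integrableOn_compact (isCompact_closedBall _ _)
  obtain ⟨g, hg1, hg2⟩ := (memLp_one_iff_integrable.2 hid).exists_simpleFunc_eLpNorm_sub_lt
    ENNReal.one_ne_top (ε := ENNReal.ofReal (δ * c)) (by simp; positivity)
  have hgi : Integrable g μ := memLp_one_iff_integrable.1 hg2
  have hintr : ∫ x, ‖x - g x‖ ∂μ ≤ δ * c := by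
    have h1 : Integrable (fun x => x - g x) μ := hid.sub hgi
    have h2 : eLpNorm (fun x => x - g x) 1 μ ≤ ENNReal.ofReal (δ * c) := hg1.le
    rw [eLpNorm_one_eq_lintegral_enorm] at h2
    rw [integral_norm_eq_lintegral_enorm h1.aestronglyMeasurable]
    exact ENNReal.toReal_le_of_le_ofReal (by positivity) h2
  have hin : ∀ u : E, |(∫ x, |⟪g x, u⟫| ∂μ) - c * ‖u‖| ≤ δ * c * ‖u‖ := by
    intro u
    rw [← hg u]
    unfold gball
    rw [← integral_sub]
    · refine (abs_integral_le_integral_abs).trans ?_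
      calc ∫ x, |(|⟪g x, u⟫| - |⟪x, u⟫|)| ∂μ ≤ ∫ x, ‖x - g x‖ * ‖u‖ ∂μ := by
            refine integral_mono_of_nonneg (Filter.Eventually.of_forall fun x => abs_nonneg _)
              ((hid.sub hgi).norm.mul_const _) (Filter.Eventually.of_forall fun x => ?_)
            refine (abs_abs_sub_abs_le_abs_sub _ _).trans ?_
            beta_reduce
            rw [← inner_sub_left, norm_sub_rev x]
            exact abs_real_inner_le_norm _ _
        _ = (∫ x, ‖x - g x‖ ∂μ) * ‖u‖ := integral_mul_const _ _
        _ ≤ _ := mul_le_mul_of_nonneg_right hintr (norm_nonneg _)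
    · exact (hgi.inner_const u).abs
    · exact (hid.inner_const u).abs
  have hsum : ∀ u : E, ∫ x, |⟪g x, u⟫| ∂μ = ∑ y ∈ g.range, μ.real (g ⁻¹' {y}) * |⟪y, u⟫| := by
    intro u
    have h1 : (fun x => |⟪g x, u⟫|) = (g.map (fun y => |⟪y, u⟫|)) := by
      ext x; simp
    have h2 : Integrable (g.map (fun y => |⟪y, u⟫|)) μ := by
      rw [← h1]; exact (hgi.inner_const u).abs
    rw [h1, ← SimpleFunc.integral_eq_integral _ h2, SimpleFunc.map_integral g _ hgi (by simp)]
    simp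
  refine ⟨g.range, fun y => (c⁻¹ * μ.real (g ⁻¹' {(y : E)})) • (y : E), fun s hs => ?_⟩
  have hS : ∀ u : E, ∑ y : g.range, |⟪(c⁻¹ * μ.real (g ⁻¹' {(y : E)})) • (y : E), u⟫| =
      c⁻¹ * ∫ x, |⟪g x, u⟫| ∂μ := by
    intro u
    rw [hsum, Finset.mul_sum, ← Finset.sum_coe_sort g.range]
    refine Finset.sum_congr rfl fun y _ => ?_
    rw [real_inner_smul_left, abs_mul, abs_of_nonneg (by positivity), mul_assoc]
  refine zono_ball _ (fun u => ?_) (fun u => ?_) hs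
  · rw [hS, ← mul_le_mul_iff_right₀ hc, ← mul_assoc c c⁻¹, mul_inv_cancel₀ hc.ne']
    have := abs_le.1 (hin u)
    linarith [this.1]
  · rw [hS, ← mul_le_mul_iff_right₀ hc, ← mul_assoc c c⁻¹, mul_inv_cancel₀ hc.ne']
    have := abs_le.1 (hin u)
    linarith [this.2]

end BallZono

section Intrinsic

variable {d : ℕ}


/-- Steiner polynomial. -/
noncomputable def stpoly (V : ℕ → Set (EuclideanSpace ℝ (Fin d)) → ℝ)
    (A : Set (EuclideanSpace ℝ (Fin d))) : Polynomial ℝ :=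
  ∑ i ∈ Finset.range (d + 1), Polynomial.C (unitBallVol (d - i) * V i A) * Polynomial.X ^ (d - i)

lemma stpoly_natDegree (V : ℕ → Set (EuclideanSpace ℝ (Fin d)) → ℝ)
    (A : Set (EuclideanSpace ℝ (Fin d))) : (stpoly V A).natDegree ≤ d := by
  refine Polynomial.natDegree_sum_le_of_forall_le _ _ fun i _ => ?_
  exact (Polynomial.natDegree_C_mul_X_pow_le _ _).trans (Nat.sub_le _ _)

lemma stpoly_coeff (V : ℕ → Set (EuclideanSpace ℝ (Fin d)) → ℝ)
    (A : Set (EuclideanSpace ℝ (Fin d))) {k : ℕ} (hk : k ≤ d) :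
    (stpoly V A).coeff (d - k) = unitBallVol (d - k) * V k A := by
  unfold stpoly
  rw [Polynomial.finset_sum_coeff, Finset.sum_eq_single k]
  · rw [Polynomial.coeff_C_mul_X_pow, if_pos rfl]
  · intro i hi hik
    rw [Polynomial.coeff_C_mul_X_pow, if_neg]
    have := Finset.mem_range.1 hi
    omega
  · intro h; exact absurd (Finset.mem_range.2 (by omega)) h

lemma unitBallVol_pos (m : ℕ) : 0 < unitBallVol m := by
  unfold unitBallVol
  refine ENNReal.toReal_pos ?_ (isCompact_closedBall _ _).measure_lt_top.ne
  exact (measure_closedBall_pos volume _ one_pos).ne'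

lemma stpoly_eval {V : ℕ → Set (EuclideanSpace ℝ (Fin d)) → ℝ} (hV : IsIntrinsicVolumes d V)
    {A : Set (EuclideanSpace ℝ (Fin d))} (hA : IsCompact A) (hc : Convex ℝ A) (hne : A.Nonempty)
    {ε : ℝ} (hε : 0 < ε) : (stpoly V A).eval ε = (volume (A + closedBall 0 ε)).toReal := by
  have := (hV A hc hA hne).1 ε hε
  rw [smul_unitClosedBall_of_nonneg hε.le] at this
  rw [this, stpoly, Polynomial.eval_finset_sum]
  simp

lemma stpoly_eval_zero {V : ℕ → Set (EuclideanSpace ℝ (Fin d)) → ℝ} (hV : IsIntrinsicVolumes d V)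
    {A : Set (EuclideanSpace ℝ (Fin d))} (hA : IsCompact A) (hc : Convex ℝ A) (hne : A.Nonempty) :
    (stpoly V A).eval 0 = (volume A).toReal := by
  have h1 : Filter.Tendsto (fun ε => (volume (cthickening ε A)).toReal) (nhdsWithin 0 (Ioi 0))
      (nhds (volume A).toReal) :=
    (ENNReal.tendsto_toReal hA.measure_lt_top.ne).comp
      ((tendsto_measure_cthickening_of_isCompact hA).mono_left nhdsWithin_le_nhds)
  have h2 : Filter.Tendsto (fun ε => (stpoly V A).eval ε) (nhdsWithin 0 (Ioi 0))
      (nhds ((stpoly V A).eval 0)) :=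
    ((stpoly V A).continuous.tendsto 0).mono_left nhdsWithin_le_nhds
  refine tendsto_nhds_unique h2 (h1.congr' ?_)
  filter_upwards [self_mem_nhdsWithin] with ε hε
  rw [← hA.add_closedBall_zero (le_of_lt hε), stpoly_eval hV hA hc hne hε]

lemma intrinsic_d {V : ℕ → Set (EuclideanSpace ℝ (Fin d)) → ℝ} (hV : IsIntrinsicVolumes d V)
    {A : Set (EuclideanSpace ℝ (Fin d))} (hA : IsCompact A) (hc : Convex ℝ A) (hne : A.Nonempty) :
    (stpoly V A).coeff 0 = (volume A).toReal := by
  rw [Polynomial.coeff_zero_eq_eval_zero, stpoly_eval_zero hV hA hc hne]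

lemma stpoly_congr {V : ℕ → Set (EuclideanSpace ℝ (Fin d)) → ℝ} (hV : IsIntrinsicVolumes d V)
    {A : Set (EuclideanSpace ℝ (Fin d))} (hA : IsCompact A) (hc : Convex ℝ A) (hne : A.Nonempty)
    {q : Polynomial ℝ}
    (h : ∀ ε : ℝ, 0 < ε → (volume (A + closedBall 0 ε)).toReal = q.eval ε) : stpoly V A = q := by
  refine Polynomial.eq_of_infinite_eval_eq _ _ ((Set.Ioi_infinite (0 : ℝ)).mono fun ε hε => ?_)
  exact (stpoly_eval hV hA hc hne hε).trans (h ε hε)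

lemma stpoly_hrefl {V : ℕ → Set (EuclideanSpace ℝ (Fin d)) → ℝ} (hV : IsIntrinsicVolumes d V)
    {A : Set (EuclideanSpace ℝ (Fin d))} (hA : IsCompact A) (hc : Convex ℝ A) (hne : A.Nonempty)
    (v : (EuclideanSpace ℝ (Fin d))) : stpoly V (hrefl v '' A) = stpoly V A := by
  refine stpoly_congr hV (hrefl_image_compact v hA) (hrefl_image_convex v hc) (hne.image _)
    fun ε hε => ?_
  rw [stpoly_eval hV hA hc hne hε]
  have h1 : hrefl v '' A + closedBall 0 ε = hrefl v '' (A + closedBall 0 ε) := by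
    rw [Set.image_add, LinearIsometryEquiv.image_closedBall, map_zero]
  rw [h1]
  congr 1
  have h2 := (hrefl v).measurePreserving.measure_preimage_equiv
    (f := (hrefl v).toHomeomorph.toMeasurableEquiv) (hrefl v '' (A + closedBall 0 ε))
  rw [← h2]
  congr 1
  exact Set.preimage_image_eq _ (hrefl v).injective

lemma vol_mono {X Y : Set (EuclideanSpace ℝ (Fin d))} (hY : IsCompact Y) (h : X ⊆ Y) :
    (volume X).toReal ≤ (volume Y).toReal :=
  ENNReal.toReal_mono hY.measure_lt_top.ne (measure_mono h)

lemma closedBall_add_closedBall_eq {a b : ℝ} (ha : 0 ≤ a) (hb : 0 ≤ b) :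
    closedBall (0 : (EuclideanSpace ℝ (Fin d))) a + closedBall (0 : (EuclideanSpace ℝ (Fin d))) b = closedBall 0 (a + b) := by
  rw [closedBall_add_closedBall ha hb, add_zero]

/-- continuity of the Steiner polynomial under Hausdorff convergence -/
lemma stpoly_tendsto {V : ℕ → Set (EuclideanSpace ℝ (Fin d)) → ℝ} (hV : IsIntrinsicVolumes d V)
    {A : Set (EuclideanSpace ℝ (Fin d))} (hA : IsCompact A) (hc : Convex ℝ A) (hne : A.Nonempty)
    {α : Type*} {l : Filter α} {L : α → Set (EuclideanSpace ℝ (Fin d))} (hL : ∀ a, IsCompact (L a))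
    (hLc : ∀ a, Convex ℝ (L a)) (hLne : ∀ a, (L a).Nonempty) {δ : α → ℝ}
    (hδ0 : ∀ a, 0 ≤ δ a)
    (hδ : Filter.Tendsto δ l (nhds 0)) (h1 : ∀ a, L a ⊆ A + closedBall 0 (δ a))
    (h2 : ∀ a, A ⊆ L a + closedBall 0 (δ a)) (i : ℕ) :
    Filter.Tendsto (fun a => (stpoly V (L a)).coeff i) l (nhds ((stpoly V A).coeff i)) := by
  refine poly_coeff_tendsto (fun a => stpoly_natDegree V _) (stpoly_natDegree V _) (fun s hs => ?_) i
  have t1 : Filter.Tendsto (fun a => (stpoly V A).eval (s - δ a)) l (nhds ((stpoly V A).eval s)) := by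
    have : Filter.Tendsto (fun a => s - δ a) l (nhds (s - 0)) := hδ.const_sub s
    rw [sub_zero] at this
    exact ((stpoly V A).continuous.tendsto s).comp this
  have t2 : Filter.Tendsto (fun a => (stpoly V A).eval (s + δ a)) l (nhds ((stpoly V A).eval s)) := by
    have : Filter.Tendsto (fun a => s + δ a) l (nhds (s + 0)) := hδ.const_add s
    rw [add_zero] at this
    exact ((stpoly V A).continuous.tendsto s).comp this
  have hev : ∀ᶠ a in l, δ a < s := hδ.eventually (gt_mem_nhds hs)
  refine tendsto_of_tendsto_of_tendsto_of_le_of_le' t1 t2 ?_ ?_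
  · filter_upwards [hev] with a ha
    rw [stpoly_eval hV hA hc hne (by linarith : 0 < s - δ a),
      stpoly_eval hV (hL a) (hLc a) (hLne a) hs]
    refine vol_mono ((hL a).add (isCompact_closedBall _ _)) ?_
    refine (Set.add_subset_add_right (h2 a)).trans ?_
    rw [add_assoc, closedBall_add_closedBall_eq (hδ0 a) (by linarith)]
    rw [show δ a + (s - δ a) = s by ring]
  · filter_upwards with a
    rw [stpoly_eval hV hA hc hne (by linarith [hδ0 a] : 0 < s + δ a),
      stpoly_eval hV (hL a) (hLc a) (hLne a) hs]
    refine vol_mono (hA.add (isCompact_closedBall _ _)) ?_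
    refine (Set.add_subset_add_right (h1 a)).trans ?_
    rw [add_assoc, closedBall_add_closedBall_eq (hδ0 a) hs.le, add_comm s]

lemma zono_vol_tendsto {V : ℕ → Set (EuclideanSpace ℝ (Fin d)) → ℝ} (hV : IsIntrinsicVolumes d V)
    {A : Set (EuclideanSpace ℝ (Fin d))} (hA : IsCompact A) (hc : Convex ℝ A) (hne : A.Nonempty)
    {Z : ℕ → Set (EuclideanSpace ℝ (Fin d))} {s : ℝ} (hs : 0 < s) (hZ : ∀ n, IsCompact (Z n))
    (h1 : ∀ n : ℕ, closedBall 0 (s * (1 - (1 / ((n : ℝ) + 2)))) ⊆ Z n)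
    (h2 : ∀ n : ℕ, Z n ⊆ closedBall 0 (s * (1 + (1 / ((n : ℝ) + 2))))) :
    Filter.Tendsto (fun n => (volume (A + Z n)).toReal) Filter.atTop
      (nhds ((stpoly V A).eval s)) := by
  have hlim : Filter.Tendsto (fun n : ℕ => 1 / ((n : ℝ) + 2)) Filter.atTop (nhds 0) := by
    have h := (Filter.tendsto_add_atTop_iff_nat 1).2 (tendsto_one_div_add_atTop_nhds_zero_nat (𝕜 := ℝ))
    refine h.congr fun n => ?_
    push_cast; ring_nf
  have hn : ∀ n : ℕ, 1 / ((n : ℝ) + 2) < 1 := by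
    intro n
    rw [div_lt_one (by positivity)]
    have : (0 : ℝ) ≤ n := by positivity
    linarith
  have t1 : Filter.Tendsto (fun n : ℕ => (stpoly V A).eval (s * (1 - (1 / ((n : ℝ) + 2)))))
      Filter.atTop (nhds ((stpoly V A).eval s)) := by
    have : Filter.Tendsto (fun n : ℕ => s * (1 - (1 / ((n : ℝ) + 2)))) Filter.atTop
      (nhds (s * (1 - 0))) := (hlim.const_sub 1).const_mul s
    rw [sub_zero, mul_one] at this
    exact ((stpoly V A).continuous.tendsto s).comp this
  have t2 : Filter.Tendsto (fun n : ℕ => (stpoly V A).eval (s * (1 + (1 / ((n : ℝ) + 2)))))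
      Filter.atTop (nhds ((stpoly V A).eval s)) := by
    have : Filter.Tendsto (fun n : ℕ => s * (1 + (1 / ((n : ℝ) + 2)))) Filter.atTop
      (nhds (s * (1 + 0))) := (hlim.const_add 1).const_mul s
    rw [add_zero, mul_one] at this
    exact ((stpoly V A).continuous.tendsto s).comp this
  refine tendsto_of_tendsto_of_tendsto_of_le_of_le t1 t2 (fun n => ?_) (fun n => ?_)
  · have : 0 < s * (1 - (1 / ((n : ℝ) + 2))) := mul_pos hs (by linarith [hn n])
    beta_reduce
    rw [stpoly_eval hV hA hc hne this]
    exact vol_mono (hA.add (hZ n)) (Set.add_subset_add_left (h1 n))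
  · have : 0 < s * (1 + (1 / ((n : ℝ) + 2))) := by positivity
    beta_reduce
    rw [stpoly_eval hV hA hc hne this]
    exact vol_mono (hA.add (isCompact_closedBall _ _)) (Set.add_subset_add_left (h2 n))

lemma stpoly_steiner_le (hd : 0 < d) {V : ℕ → Set (EuclideanSpace ℝ (Fin d)) → ℝ}
    (hV : IsIntrinsicVolumes d V)
    {A : Set (EuclideanSpace ℝ (Fin d))} (hA : IsCompact A) (hc : Convex ℝ A) (hne : A.Nonempty)
    (v : (EuclideanSpace ℝ (Fin d))) (hv : ‖v‖ = 1) (i : ℕ) :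
    (stpoly V (steiner v A)).coeff i ≤ (stpoly V A).coeff i := by
  classical
  haveI : Nontrivial (EuclideanSpace ℝ (Fin d)) := Module.nontrivial_of_finrank_pos (R := ℝ) (by simpa using hd)
  have hex := fun n : ℕ => exists_zono_ball (E := (EuclideanSpace ℝ (Fin d))) (δ := 1 / ((n : ℝ) + 2)) (by positivity)
  choose F θ hθ using hex
  have hp := fun n : ℕ => zono_diff_poly (θ n) v hv hA hc
  choose p hp1 hp2 hp3 using hp
  have hlim := poly_coeff_tendsto (l := Filter.atTop) (p := p) (n := d)
    (q := stpoly V A + stpoly V (hrefl v '' A) - Polynomial.C 2 * stpoly V (steiner v A))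
    (fun n => by simpa using hp2 n) ?_ ?_ i
  · have h0 := ge_of_tendsto' hlim (fun n => hp1 n i)
    rw [stpoly_hrefl hV hA hc hne] at h0
    simp only [Polynomial.coeff_sub, Polynomial.coeff_add, Polynomial.coeff_C_mul] at h0
    linarith
  · refine (Polynomial.natDegree_sub_le _ _).trans (max_le ?_ ?_)
    · exact (Polynomial.natDegree_add_le _ _).trans
        (max_le (stpoly_natDegree V _) (stpoly_natDegree V _))
    · exact (Polynomial.natDegree_C_mul_le _ _).trans (stpoly_natDegree V _)
  · intro s hs
    refine Filter.Tendsto.congr (fun n => hp3 n s hs.le) ?_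
    simp only [Polynomial.eval_sub, Polynomial.eval_add, Polynomial.eval_mul, Polynomial.eval_C]
    have hz := fun n => zono_compact (θ n) (fun _ => s)
    have hz1 := fun n => (hθ n s hs.le).1
    have hz2 := fun n => (hθ n s hs.le).2
    exact ((zono_vol_tendsto hV hA hc hne hs hz hz1 hz2).add
      (zono_vol_tendsto hV (hrefl_image_compact v hA) (hrefl_image_convex v hc) (hne.image _) hs
        hz hz1 hz2)).sub
      ((zono_vol_tendsto hV (steiner_compact v hv hA) (steiner_convex v hc) (steiner_nonempty v hne) hs
        hz hz1 hz2).const_mul 2)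

end Intrinsic

section Extremal

variable {E : Type*} [NormedAddCommGroup E] [InnerProductSpace ℝ E] [FiniteDimensional ℝ E]
  [MeasurableSpace E] [BorelSpace E]

lemma steiner_subset_ball (v : E) (hv : ‖v‖ = 1) {K : Set E} {R : ℝ} (hK : K ⊆ closedBall 0 R) :
    steiner v K ⊆ closedBall 0 R := by
  rintro _ ⟨a, b, w, ha, hb, rfl⟩
  have ha' : a ∈ fib v (closedBall (0 : E) R) w := hK ha
  have hb' : b ∈ fib v (closedBall (0 : E) R) w := hK hb
  have h : |(a - b) / 2| ≤ (|a| + |b|) / 2 := by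
    rw [abs_div, abs_two]
    have := abs_sub a b
    linarith
  rcases le_total |a| |b| with h1 | h1
  · exact fib_closedBall v hv w hb' (by linarith)
  · exact fib_closedBall v hv w ha' (by linarith)

lemma interior_nonempty_of_vol {B : Set E} (hB : IsClosed B) (hc : Convex ℝ B)
    (h : volume B ≠ 0) : (interior B).Nonempty := by
  by_contra hne
  rw [Set.not_nonempty_iff_eq_empty] at hne
  apply h
  have h1 := hc.addHaar_frontier volume
  rw [hB.frontier_eq, hne, diff_empty] at h1
  exact h1

lemma eq_of_subset_of_vol {A B : Set E} (hA : IsClosed A) (hB : IsCompact B) (hc : Convex ℝ B)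
    (hintr : (interior B).Nonempty) (hAB : A ⊆ B) (h : volume A = volume B) : A = B := by
  refine subset_antisymm hAB ?_
  have hd : volume (B \ A) = 0 := by
    rw [measure_diff hAB hA.measurableSet.nullMeasurableSet
      ((measure_mono hAB).trans_lt hB.measure_lt_top).ne, h, tsub_self]
  have hio : IsOpen (interior B \ A) := isOpen_interior.sdiff hA
  have h0 : interior B \ A = ∅ := by
    rw [← hio.measure_eq_zero_iff volume]
    exact measure_mono_null (diff_subset_diff_left interior_subset) hd
  have h1 : interior B ⊆ A := diff_eq_empty.1 h0
  calc B ⊆ closure B := subset_closure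
    _ = closure (interior B) := (hc.closure_interior_eq_closure_of_nonempty_interior hintr).symm
    _ ⊆ A := hA.closure_subset_iff.2 h1

lemma steiner_improve {L : Set E} (hL : IsCompact L) (hc : Convex ℝ L) {ρ : ℝ} (hρ : 0 < ρ)
    (hvol : volume L = volume (closedBall (0 : E) ρ)) (hne : L ≠ closedBall (0 : E) ρ) :
    ∃ v : E, ‖v‖ = 1 ∧ volume (L ∩ closedBall (0 : E) ρ) <
      volume (steiner v L ∩ closedBall (0 : E) ρ) := by
  have hBpos : volume (closedBall (0 : E) ρ) ≠ 0 := (measure_closedBall_pos volume _ hρ).ne'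
  have hLi := interior_nonempty_of_vol hL.isClosed hc (hvol ▸ hBpos)
  have hBi := interior_nonempty_of_vol isClosed_closedBall (convex_closedBall (0 : E) ρ) hBpos
  refine steiner_inter_ball_strict hL hc (U := interior L \ closedBall 0 ρ)
    (U' := interior (closedBall 0 ρ) \ L) (isOpen_interior.sdiff isClosed_closedBall) ?_
    (diff_subset.trans interior_subset) disjoint_sdiff_left (isOpen_interior.sdiff hL.isClosed) ?_
    (diff_subset.trans interior_subset) disjoint_sdiff_left
  · by_contra h
    rw [not_nonempty_iff_eq_empty, diff_eq_empty] at h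
    refine hne (eq_of_subset_of_vol hL.isClosed (isCompact_closedBall _ _) (convex_closedBall _ _)
      hBi ?_ hvol)
    calc L ⊆ closure L := subset_closure
      _ = closure (interior L) := (hc.closure_interior_eq_closure_of_nonempty_interior hLi).symm
      _ ⊆ _ := isClosed_closedBall.closure_subset_iff.2 h
  · by_contra h
    rw [not_nonempty_iff_eq_empty, diff_eq_empty] at h
    refine hne (eq_of_subset_of_vol isClosed_closedBall hL hc
      hLi ?_ hvol.symm).symm
    calc closedBall (0 : E) ρ ⊆ closure (closedBall (0 : E) ρ) := subset_closure
      _ = closure (interior (closedBall (0 : E) ρ)) :=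
        ((convex_closedBall (0 : E) ρ).closure_interior_eq_closure_of_nonempty_interior hBi).symm
      _ ⊆ _ := hL.isClosed.closure_subset_iff.2 h

open TopologicalSpace in
lemma hd_subset {L M : NonemptyCompacts E} {δ : ℝ} (h : dist L M < δ) :
    (L : Set E) ⊆ (M : Set E) + closedBall 0 δ := by
  intro x hx
  rw [NonemptyCompacts.dist_eq] at h
  obtain ⟨y, hy, hxy⟩ := exists_dist_lt_of_hausdorffDist_lt hx h
    (Metric.hausdorffEDist_ne_top_of_nonempty_of_bounded L.nonempty M.nonempty
      L.isCompact.isBounded M.isCompact.isBounded)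
  refine ⟨y, hy, x - y, ?_, add_sub_cancel y x⟩
  rw [mem_closedBall_zero_iff, ← dist_eq_norm]
  exact hxy.le

open TopologicalSpace in
lemma convex_of_tendsto {L : ℕ → NonemptyCompacts E} {M : NonemptyCompacts E} {δ : ℕ → ℝ}
    (hδ : Filter.Tendsto δ Filter.atTop (nhds 0)) (hδ0 : ∀ n, 0 ≤ δ n)
    (hc : ∀ n, Convex ℝ (L n : Set E))
    (h1 : ∀ n, (L n : Set E) ⊆ (M : Set E) + closedBall 0 (δ n))
    (h2 : ∀ n, (M : Set E) ⊆ (L n : Set E) + closedBall 0 (δ n)) : Convex ℝ (M : Set E) := by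
  intro x hx y hy a b ha hb hab
  rw [M.isCompact.isClosed.mem_iff_infDist_zero M.nonempty]
  have key : ∀ n, infDist (a • x + b • y) (M : Set E) ≤ δ n + δ n := by
    intro n
    have h3 := ((hc n).add (convex_closedBall (0 : E) (δ n))) (h2 n hx) (h2 n hy) ha hb hab
    obtain ⟨p, hp, q, hq, hpq⟩ := h3
    obtain ⟨p', hp', q', hq', hpq'⟩ := h1 n hp
    beta_reduce at hpq hpq'
    rw [← hpq, ← hpq']
    refine (infDist_le_dist_of_mem hp').trans ?_
    rw [dist_eq_norm, add_assoc, add_sub_cancel_left]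
    exact (norm_add_le _ _).trans (add_le_add (mem_closedBall_zero_iff.1 hq')
      (mem_closedBall_zero_iff.1 hq))
  have h0 : infDist (a • x + b • y) (M : Set E) ≤ 0 := by
    refine ge_of_tendsto' (f := fun n => δ n + δ n) (x := Filter.atTop) ?_ key
    simpa using hδ.add hδ
  exact le_antisymm h0 infDist_nonneg

open TopologicalSpace in
lemma usc_vol (ρ : ℝ) : UpperSemicontinuous
    (fun L : NonemptyCompacts E => volume ((L : Set E) ∩ closedBall 0 ρ)) := by
  intro M y hy
  set μ : Measure E := volume.restrict (closedBall (0 : E) ρ) with hμ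
  haveI : IsFiniteMeasure μ := ⟨by
    rw [hμ, Measure.restrict_apply_univ]; exact (isCompact_closedBall _ _).measure_lt_top⟩
  have hres : ∀ {X : Set E}, IsClosed X → volume (X ∩ closedBall 0 ρ) = μ X := by
    intro X hX
    rw [hμ, Measure.restrict_apply hX.measurableSet]
  have ht := tendsto_measure_cthickening_of_isClosed (μ := μ) (s := (M : Set E))
    ⟨1, one_pos, measure_ne_top _ _⟩ M.isCompact.isClosed
  beta_reduce at hy ⊢
  rw [hres M.isCompact.isClosed] at hy
  have he := (ht.mono_left (nhdsWithin_le_nhds (s := Ioi 0))).eventually (gt_mem_nhds hy)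
  obtain ⟨δ, hδ, hδ0⟩ := (he.and self_mem_nhdsWithin).exists
  filter_upwards [ball_mem_nhds M hδ0] with L hL
  rw [hres L.isCompact.isClosed]
  refine lt_of_le_of_lt (measure_mono ?_) hδ
  have := hd_subset hL
  rwa [M.isCompact.add_closedBall_zero (le_of_lt hδ0)] at this

end Extremal

section Iso
variable {d : ℕ}

open TopologicalSpace in
lemma stpoly_iso (hd : 0 < d) {V : ℕ → Set (EuclideanSpace ℝ (Fin d)) → ℝ}
    (hV : IsIntrinsicVolumes d V)
    {K : Set (EuclideanSpace ℝ (Fin d))} (hK : IsCompact K) (hc : Convex ℝ K)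
    {ρ : ℝ} (hρ : 0 < ρ) (hvol : volume K = volume (closedBall (0 : EuclideanSpace ℝ (Fin d)) ρ))
    (i : ℕ) :
    (stpoly V (closedBall 0 ρ)).coeff i ≤ (stpoly V K).coeff i := by
  have hne : K.Nonempty := by
    rw [nonempty_iff_ne_empty]
    rintro rfl
    rw [measure_empty] at hvol
    exact (measure_closedBall_pos volume _ hρ).ne hvol
  obtain ⟨R, hR⟩ := hK.isBounded.subset_closedBall (0 : EuclideanSpace ℝ (Fin d))
  set 𝒞 : Set (NonemptyCompacts (EuclideanSpace ℝ (Fin d))) :=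
    {L | (L : Set (EuclideanSpace ℝ (Fin d))) ⊆ closedBall 0 R} ∩
    {L | Convex ℝ (L : Set (EuclideanSpace ℝ (Fin d))) ∧
      (stpoly V L).coeff 0 = (stpoly V K).coeff 0 ∧
      (stpoly V L).coeff i ≤ (stpoly V K).coeff i} with h𝒞
  have hclosed : IsClosed {L : NonemptyCompacts (EuclideanSpace ℝ (Fin d)) |
      Convex ℝ (L : Set (EuclideanSpace ℝ (Fin d))) ∧
      (stpoly V L).coeff 0 = (stpoly V K).coeff 0 ∧
      (stpoly V L).coeff i ≤ (stpoly V K).coeff i} := by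
    refine IsSeqClosed.isClosed ?_
    intro L M hL hLM
    set δ : ℕ → ℝ := fun n => dist (L n) M + 1 / ((n : ℝ) + 1) with hδ
    have hδ0 : ∀ n, 0 ≤ δ n := fun n => by positivity
    have hδt : Filter.Tendsto δ Filter.atTop (nhds 0) := by
      have := (tendsto_iff_dist_tendsto_zero.1 hLM).add
        (tendsto_one_div_add_atTop_nhds_zero_nat (𝕜 := ℝ))
      simpa [hδ] using this
    have hlt : ∀ n, dist (L n) M < δ n := fun n => by
      have : 0 < 1 / ((n : ℝ) + 1) := by positivity
      simp only [hδ]; linarith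
    have h1 : ∀ n, (L n : Set (EuclideanSpace ℝ (Fin d))) ⊆ (M : Set _) + closedBall 0 (δ n) :=
      fun n => hd_subset (hlt n)
    have h2 : ∀ n, (M : Set (EuclideanSpace ℝ (Fin d))) ⊆ (L n : Set _) + closedBall 0 (δ n) :=
      fun n => hd_subset (by rw [dist_comm]; exact hlt n)
    have hMc := convex_of_tendsto hδt hδ0 (fun n => (hL n).1) h1 h2
    have ht := stpoly_tendsto hV M.isCompact hMc M.nonempty (fun n => (L n).isCompact)
      (fun n => (hL n).1) (fun n => (L n).nonempty) hδ0 hδt h1 h2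
    refine ⟨hMc, ?_, ?_⟩
    · refine tendsto_nhds_unique (ht 0) ?_
      refine tendsto_const_nhds.congr fun n => ((hL n).2.1).symm
    · exact le_of_tendsto' (ht i) fun n => (hL n).2.2
  have hcomp : IsCompact 𝒞 :=
    (NonemptyCompacts.isCompact_subsets_of_isCompact (isCompact_closedBall _ _)).inter_right hclosed
  have hKmem : (⟨⟨K, hK⟩, hne⟩ : NonemptyCompacts (EuclideanSpace ℝ (Fin d))) ∈ 𝒞 :=
    ⟨hR, hc, rfl, le_rfl⟩
  obtain ⟨L, hL𝒞, hLmax⟩ := UpperSemicontinuousOn.exists_isMaxOn ⟨_, hKmem⟩ hcomp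
    ((usc_vol (E := EuclideanSpace ℝ (Fin d)) ρ).upperSemicontinuousOn 𝒞)
  obtain ⟨hLR, hLc, hL0, hLi⟩ := hL𝒞
  have hLvol : volume (L : Set (EuclideanSpace ℝ (Fin d))) = volume (closedBall (0 : EuclideanSpace ℝ (Fin d)) ρ) := by
    rw [← hvol]
    rw [intrinsic_d hV L.isCompact hLc L.nonempty, intrinsic_d hV hK hc hne] at hL0
    exact (ENNReal.toReal_eq_toReal_iff' L.isCompact.measure_lt_top.ne hK.measure_lt_top.ne).1 hL0
  by_cases hLB : (L : Set (EuclideanSpace ℝ (Fin d))) = closedBall 0 ρ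
  · rw [← hLB]; exact hLi
  · exfalso
    obtain ⟨v, hv, hlt⟩ := steiner_improve L.isCompact hLc hρ hLvol hLB
    have hSc := steiner_compact v hv L.isCompact
    have hSn := steiner_nonempty v L.nonempty
    have hmem : (⟨⟨steiner v (L : Set (EuclideanSpace ℝ (Fin d))), hSc⟩, hSn⟩ : NonemptyCompacts (EuclideanSpace ℝ (Fin d))) ∈ 𝒞 := by
      refine ⟨steiner_subset_ball v hv hLR, steiner_convex v hLc, ?_, ?_⟩
      · rw [← hL0]
        show (stpoly V (steiner v (L : Set (EuclideanSpace ℝ (Fin d))))).coeff 0 = _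
        rw [intrinsic_d hV hSc (steiner_convex v hLc) hSn,
          intrinsic_d hV L.isCompact hLc L.nonempty, steiner_volume v hv L.isCompact hLc]
      · exact (stpoly_steiner_le hd hV L.isCompact hLc L.nonempty v hv i).trans hLi
    exact absurd (hLmax hmem) (not_le.2 hlt)

lemma stpoly_ball (hd : 0 < d) {V : ℕ → Set (EuclideanSpace ℝ (Fin d)) → ℝ}
    (hV : IsIntrinsicVolumes d V) {ρ : ℝ} (hρ : 0 < ρ) {k : ℕ} (hk : k ≤ d) :
    (stpoly V (closedBall 0 ρ)).coeff (d - k) = d.choose k * unitBallVol d * ρ ^ k := by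
  have h : stpoly V (closedBall 0 ρ) =
      Polynomial.C (unitBallVol d) * (Polynomial.X + Polynomial.C ρ) ^ d := by
    refine stpoly_congr hV (isCompact_closedBall _ _) (convex_closedBall _ _)
      (nonempty_closedBall.2 hρ.le) fun ε hε => ?_
    haveI : Nontrivial (EuclideanSpace ℝ (Fin d)) :=
      Module.nontrivial_of_finrank_pos (R := ℝ) (by simpa using hd)
    rw [closedBall_add_closedBall_eq hρ.le hε.le,
      Measure.addHaar_closedBall' volume _ (by positivity), ENNReal.toReal_mul,
      ENNReal.toReal_ofReal (by positivity)]
    simp [unitBallVol]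
    ring
  rw [h, Polynomial.coeff_C_mul, Polynomial.coeff_X_add_C_pow, Nat.sub_sub_self hk,
    Nat.choose_symm hk]
  ring

/-- Extended isoperimetric inequality. -/
lemma extended_iso (hd : 0 < d) {V : ℕ → Set (EuclideanSpace ℝ (Fin d)) → ℝ}
    (hV : IsIntrinsicVolumes d V)
    {K : Set (EuclideanSpace ℝ (Fin d))} (hK : IsCompact K) (hc : Convex ℝ K)
    (hpos : 0 < (volume K).toReal) {k : ℕ} (hk : k ≤ d) :
    (d.choose k : ℝ) * unitBallVol d ^ ((1 : ℝ) - k / d) / unitBallVol (d - k) *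
        (volume K).toReal ^ ((k : ℝ) / d) ≤ V k K := by
  have hω := unitBallVol_pos d
  have hω' := unitBallVol_pos (d - k)
  have hdR : (0 : ℝ) < d := by exact_mod_cast hd
  set x := (volume K).toReal / unitBallVol d with hx
  have hx0 : 0 < x := div_pos hpos hω
  set ρ : ℝ := x ^ ((1 : ℝ) / d) with hρ
  have hρ0 : 0 < ρ := Real.rpow_pos_of_pos hx0 _
  have hρd : ρ ^ d = x := by
    rw [hρ, ← Real.rpow_natCast, ← Real.rpow_mul hx0.le]
    rw [one_div, inv_mul_cancel₀ hdR.ne', Real.rpow_one]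
  have hvol : volume K = volume (closedBall (0 : EuclideanSpace ℝ (Fin d)) ρ) := by
    haveI : Nontrivial (EuclideanSpace ℝ (Fin d)) :=
      Module.nontrivial_of_finrank_pos (R := ℝ) (by simpa using hd)
    rw [← ENNReal.toReal_eq_toReal_iff' hK.measure_lt_top.ne
      (isCompact_closedBall _ _).measure_lt_top.ne,
      Measure.addHaar_closedBall' volume _ hρ0.le, ENNReal.toReal_mul,
      ENNReal.toReal_ofReal (by positivity)]
    rw [finrank_euclideanSpace_fin, hρd, hx]
    have : (volume (closedBall (0 : EuclideanSpace ℝ (Fin d)) 1)).toReal = unitBallVol d := rfl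
    rw [this]; field_simp
  have h := stpoly_iso hd hV hK hc hρ0 hvol (d - k)
  rw [stpoly_ball hd hV hρ0 hk, stpoly_coeff V K hk] at h
  have h1 : ρ ^ k = (volume K).toReal ^ ((k : ℝ) / d) / unitBallVol d ^ ((k : ℝ) / d) := by
    rw [hρ, ← Real.rpow_natCast, ← Real.rpow_mul hx0.le, hx, Real.div_rpow hpos.le hω.le]
    rw [show (1 : ℝ) / d * k = k / d by ring]
  have h2 : unitBallVol d ^ ((1 : ℝ) - k / d) = unitBallVol d / unitBallVol d ^ ((k : ℝ) / d) := by
    rw [Real.rpow_sub hω, Real.rpow_one]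
  rw [h2]
  rw [h1] at h
  rw [div_mul_eq_mul_div, div_le_iff₀ hω', mul_comm (V k K)]
  refine le_trans (le_of_eq ?_) h
  ring

end Iso

section Cone

lemma chebyshev_lintegral {μ : Measure ℝ} [SFinite μ] {T b κ : ℝ → ENNReal} (hT : Measurable T)
    (hb : Measurable b) (hκ : Measurable κ) {I : Set ℝ} (hI : ∀ᵐ τ ∂μ, τ ∈ I)
    (h1 : ∀ τ ∈ I, ∀ σ ∈ I, τ ≤ σ → T τ * b σ ≤ T σ * b τ)
    (h2 : ∀ τ ∈ I, ∀ σ ∈ I, τ ≤ σ → κ τ ≤ κ σ) :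
    (∫⁻ τ, T τ ∂μ) * (∫⁻ τ, b τ * κ τ ∂μ) ≤ (∫⁻ τ, T τ * κ τ ∂μ) * (∫⁻ τ, b τ ∂μ) := by
  have hprod : ∀ {f g : ℝ → ENNReal}, Measurable f → Measurable g →
      (∫⁻ τ, f τ ∂μ) * (∫⁻ σ, g σ ∂μ) = ∫⁻ τ, ∫⁻ σ, f τ * g σ ∂μ ∂μ := by
    intro f g hf hg
    rw [← lintegral_mul_const _ hf]
    refine lintegral_congr fun τ => ?_
    rw [lintegral_const_mul _ hg]
  have hprod' : ∀ {f g : ℝ → ENNReal}, Measurable f → Measurable g →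
      (∫⁻ τ, f τ ∂μ) * (∫⁻ σ, g σ ∂μ) = ∫⁻ τ, ∫⁻ σ, f σ * g τ ∂μ ∂μ := by
    intro f g hf hg
    rw [mul_comm, hprod hg hf]
    refine lintegral_congr fun τ => lintegral_congr fun σ => mul_comm _ _
  have hmul : ∀ {A B x y : ENNReal}, A ≤ B → x ≤ y → A * y + B * x ≤ A * x + B * y := by
    intro A B x y hAB hxy
    obtain ⟨e, rfl⟩ := exists_add_of_le hAB
    obtain ⟨f, rfl⟩ := exists_add_of_le hxy
    have : A * x + (A + e) * (x + f) = (A * (x + f) + (A + e) * x) + e * f := by ring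
    rw [this]
    exact le_self_add
  have key : (∫⁻ τ, T τ ∂μ) * (∫⁻ τ, b τ * κ τ ∂μ) + (∫⁻ τ, T τ ∂μ) * (∫⁻ τ, b τ * κ τ ∂μ) ≤
      (∫⁻ τ, T τ * κ τ ∂μ) * (∫⁻ τ, b τ ∂μ) + (∫⁻ τ, T τ * κ τ ∂μ) * (∫⁻ τ, b τ ∂μ) := by
    have e1 := hprod (f := T) (g := fun τ => b τ * κ τ) hT (hb.mul hκ)
    have e2 := hprod' (f := T) (g := fun τ => b τ * κ τ) hT (hb.mul hκ)
    have e3 := hprod (f := fun τ => T τ * κ τ) (g := b) (hT.mul hκ) hb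
    have e4 := hprod' (f := fun τ => T τ * κ τ) (g := b) (hT.mul hκ) hb
    refine (congrArg₂ (· + ·) e1 e2).le.trans (le_trans ?_ (congrArg₂ (· + ·) e3 e4).ge)
    beta_reduce
    rw [← lintegral_add_left (by fun_prop), ← lintegral_add_left (by fun_prop)]
    refine lintegral_mono_ae ?_
    filter_upwards [hI] with τ hτ
    rw [← lintegral_add_left (by fun_prop), ← lintegral_add_left (by fun_prop)]
    refine lintegral_mono_ae ?_
    filter_upwards [hI] with σ hσ
    rcases le_total τ σ with h | h
    · have := hmul (h1 τ hτ σ hσ h) (h2 τ hτ σ hσ h)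
      calc _ = T τ * b σ * κ σ + T σ * b τ * κ τ := by ring
        _ ≤ _ := this
        _ = _ := by ring
    · have := hmul (h1 σ hσ τ hτ h) (h2 σ hσ τ hτ h)
      calc _ = T σ * b τ * κ τ + T τ * b σ * κ σ := by ring
        _ ≤ _ := this
        _ = _ := by ring
  rw [← two_mul, ← two_mul] at key
  exact (ENNReal.mul_le_mul_iff_right (by norm_num) (by norm_num)).1 key

variable {E : Type*} [NormedAddCommGroup E] [InnerProductSpace ℝ E] [FiniteDimensional ℝ E]
  [MeasurableSpace E] [BorelSpace E]

lemma measurable_coneMap (v : E) {Y : Set E} (hY : MeasurableSet Y) :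
    MeasurableSet {q : ℝ × (ℝ ∙ v)ᗮ | (q.1 * ‖q.2‖) • v + (q.2 : E) ∈ Y} := by
  have : Continuous (fun q : ℝ × (ℝ ∙ v)ᗮ => (q.1 * ‖q.2‖) • v + (q.2 : E)) := by fun_prop
  exact this.measurable hY

lemma inner_decomp (v : E) (hv : ‖v‖ = 1) (t : ℝ) (w : (ℝ ∙ v)ᗮ) : ⟪v, t • v + (w : E)⟫ = t := by
  have hw : ⟪v, (w : E)⟫ = 0 := Submodule.mem_orthogonal_singleton_iff_inner_right.1 w.2
  rw [inner_add_right, hw, inner_smul_right, real_inner_self_eq_norm_sq, hv]; simp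

lemma slab (v : E) (hv : ‖v‖ = 1) [Nontrivial (ℝ ∙ v)ᗮ] {Y : Set E} (hY : MeasurableSet Y) :
    volume (Y ∩ {z | 0 < ⟪v, z⟫}) = ∫⁻ τ in Ioi (0 : ℝ), ∫⁻ w : (ℝ ∙ v)ᗮ,
      ‖w‖ₑ * {w : (ℝ ∙ v)ᗮ | (τ * ‖w‖) • v + (w : E) ∈ Y}.indicator 1 w := by
  have hH : MeasurableSet {z : E | 0 < ⟪v, z⟫} :=
    (isOpen_lt continuous_const (by fun_prop)).measurableSet
  have hm := measurable_coneMap v hY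
  rw [lintegral_lintegral_swap]
  swap
  · refine Measurable.aemeasurable ?_
    have h1 : Measurable (fun q : ℝ × (ℝ ∙ v)ᗮ => ‖q.2‖ₑ) := by fun_prop
    have h2 : Measurable ({q : ℝ × (ℝ ∙ v)ᗮ | (q.1 * ‖q.2‖) • v + (q.2 : E) ∈ Y}.indicator
      (1 : ℝ × (ℝ ∙ v)ᗮ → ENNReal)) := measurable_one.indicator hm
    exact h1.mul h2
  rw [vol_fib v hv (hY.inter hH)]
  have hae : ∀ᵐ w : (ℝ ∙ v)ᗮ, w ≠ 0 := by
    rw [ae_iff]; simp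
  refine lintegral_congr_ae ?_
  filter_upwards [hae] with w hw
  have hc : 0 < ‖w‖ := norm_pos_iff.2 hw
  have hS : fib v (Y ∩ {z | 0 < ⟪v, z⟫}) w = fib v Y w ∩ Ioi 0 := by
    ext t
    have : (0 < ⟪v, t • v + (w : E)⟫) ↔ 0 < t := by rw [inner_decomp v hv]
    exact and_congr Iff.rfl this
  have hmeas : MeasurableSet {τ : ℝ | (τ * ‖w‖) • v + (w : E) ∈ Y} := by
    have : Continuous (fun τ : ℝ => (τ * ‖w‖) • v + (w : E)) := by fun_prop
    exact this.measurable hY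
  have hR : ∫⁻ τ in Ioi (0 : ℝ), ‖w‖ₑ * {w : (ℝ ∙ v)ᗮ | (τ * ‖w‖) • v + (w : E) ∈ Y}.indicator 1 w
      = ‖w‖ₑ * volume ({τ : ℝ | (τ * ‖w‖) • v + (w : E) ∈ Y} ∩ Ioi 0) := by
    rw [← Measure.restrict_apply hmeas, ← lintegral_indicator_one hmeas, ← lintegral_const_mul]
    · rfl
    · exact measurable_one.indicator hmeas
  rw [hR, hS]
  have hpre : (fun τ => ‖w‖ * τ) ⁻¹' (fib v Y w ∩ Ioi 0) =
      {τ : ℝ | (τ * ‖w‖) • v + (w : E) ∈ Y} ∩ Ioi 0 := by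
    ext τ
    have : 0 < τ * ‖w‖ ↔ 0 < τ := mul_pos_iff_of_pos_right hc
    simp only [fib, mem_preimage, mem_inter_iff, mem_ofPred_eq, mem_Ioi, mul_comm ‖w‖ τ, this]
  rw [← hpre, Real.volume_preimage_mul_left hc.ne', ← mul_assoc, abs_of_pos (by positivity),
    ← ofReal_norm, ← ENNReal.ofReal_mul (norm_nonneg _), mul_inv_cancel₀ hc.ne']
  simp

/-- angular density -/
noncomputable def kap (v : E) (C : Set E) (τ : ℝ) : ENNReal :=
  ∫⁻ w : (ℝ ∙ v)ᗮ, ‖w‖ₑ * {w : (ℝ ∙ v)ᗮ | ‖w‖ ≤ 1 ∧ (τ * ‖w‖) • v + (w : E) ∈ C}.indicator 1 w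

lemma kap_measurable (v : E) {C : Set E} (hC : MeasurableSet C) : Measurable (kap v C) := by
  unfold kap
  refine Measurable.lintegral_prod_right' (f := fun q : ℝ × (ℝ ∙ v)ᗮ => ‖q.2‖ₑ *
    {q : ℝ × (ℝ ∙ v)ᗮ | ‖q.2‖ ≤ 1 ∧ (q.1 * ‖q.2‖) • v + (q.2 : E) ∈ C}.indicator (1 : ℝ × (ℝ ∙ v)ᗮ → ENNReal) q) ?_
  have h0 : MeasurableSet {q : ℝ × (ℝ ∙ v)ᗮ | ‖q.2‖ ≤ 1} :=
    (isClosed_le (by fun_prop) continuous_const).measurableSet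
  have h1 : Measurable (fun q : ℝ × (ℝ ∙ v)ᗮ => ‖q.2‖ₑ) := by fun_prop
  exact h1.mul (measurable_one.indicator (h0.inter (measurable_coneMap v hC)))

lemma lintegral_scale {W : Type*} [NormedAddCommGroup W] [InnerProductSpace ℝ W]
    [FiniteDimensional ℝ W] [MeasurableSpace W] [BorelSpace W] {f : W → ENNReal}
    (hf : Measurable f) {t : ℝ} (ht : 0 < t) :
    ∫⁻ w, f w = ENNReal.ofReal (t ^ Module.finrank ℝ W) * ∫⁻ w, f (t • w) := by
  have h1 := Measure.map_addHaar_smul (volume : Measure W) ht.ne'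
  have h2 : ∫⁻ w, f (t • w) = ∫⁻ w, f w ∂(Measure.map (t • ·) (volume : Measure W)) :=
    (lintegral_map hf (measurable_const_smul t)).symm
  rw [h2, h1, lintegral_smul_measure, smul_eq_mul, ← mul_assoc,
    ← ENNReal.ofReal_mul (by positivity), abs_of_pos (by positivity), mul_inv_cancel₀ (by positivity)]
  simp

lemma coneVol (v : E) (hv : ‖v‖ = 1) [Nontrivial (ℝ ∙ v)ᗮ] {X C : Set E} (hX : MeasurableSet X)
    (hC : MeasurableSet C) (hCc : ∀ l : ℝ, 0 < l → ∀ z ∈ C, l • z ∈ C) {tX : ℝ → ℝ}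
    (htX : ∀ τ, 0 < tX τ)
    (hXt : ∀ τ, 0 < τ → ∀ w : (ℝ ∙ v)ᗮ, (τ * ‖w‖) • v + (w : E) ∈ X ↔ ‖w‖ ≤ tX τ) :
    volume (X ∩ C ∩ {z | 0 < ⟪v, z⟫}) = ∫⁻ τ in Ioi (0 : ℝ),
      ENNReal.ofReal (tX τ ^ (Module.finrank ℝ (ℝ ∙ v)ᗮ + 1)) * kap v C τ := by
  rw [slab v hv (hX.inter hC)]
  refine setLIntegral_congr_fun measurableSet_Ioi fun τ hτ => ?_
  beta_reduce
  have hmeas : MeasurableSet {w : (ℝ ∙ v)ᗮ | (τ * ‖w‖) • v + (w : E) ∈ X ∩ C} := by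
    have : Continuous (fun w : (ℝ ∙ v)ᗮ => (τ * ‖w‖) • v + (w : E)) := by fun_prop
    exact this.measurable (hX.inter hC)
  have hfm : Measurable (fun w : (ℝ ∙ v)ᗮ =>
      ‖w‖ₑ * {w : (ℝ ∙ v)ᗮ | (τ * ‖w‖) • v + (w : E) ∈ X ∩ C}.indicator 1 w) := by
    have h1 : Measurable (fun w : (ℝ ∙ v)ᗮ => ‖w‖ₑ) := by fun_prop
    exact h1.mul (measurable_one.indicator hmeas)
  have ht := htX τ
  rw [lintegral_scale hfm ht, kap, pow_succ, ENNReal.ofReal_mul (by positivity), mul_assoc]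
  congr 1
  have hfm' : Measurable (fun w : (ℝ ∙ v)ᗮ => ‖w‖ₑ *
      {w : (ℝ ∙ v)ᗮ | ‖w‖ ≤ 1 ∧ (τ * ‖w‖) • v + (w : E) ∈ C}.indicator 1 w) := by
    have h0 : MeasurableSet {w : (ℝ ∙ v)ᗮ | ‖w‖ ≤ 1} :=
      (isClosed_le (by fun_prop) continuous_const).measurableSet
    have h1 : Measurable (fun w : (ℝ ∙ v)ᗮ => ‖w‖ₑ) := by fun_prop
    have h2 : Continuous (fun w : (ℝ ∙ v)ᗮ => (τ * ‖w‖) • v + (w : E)) := by fun_prop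
    exact h1.mul (measurable_one.indicator (h0.inter (h2.measurable hC)))
  rw [← lintegral_const_mul _ hfm']
  refine lintegral_congr fun w => ?_
  rw [enorm_smul, ← mul_assoc, Real.enorm_eq_ofReal ht.le]
  congr 1
  have hmemC : (τ * ‖(tX τ) • w‖) • v + (((tX τ) • w : (ℝ ∙ v)ᗮ) : E) ∈ C ↔
      (τ * ‖w‖) • v + (w : E) ∈ C := by
    have he : (τ * ‖(tX τ) • w‖) • v + (((tX τ) • w : (ℝ ∙ v)ᗮ) : E) =
        (tX τ) • ((τ * ‖w‖) • v + (w : E)) := by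
      rw [norm_smul, Real.norm_of_nonneg ht.le, smul_add, smul_smul]
      simp only [Submodule.coe_smul]
      congr 2; ring
    rw [he]
    constructor
    · intro h
      have := hCc (tX τ)⁻¹ (by positivity) _ h
      rwa [smul_smul, inv_mul_cancel₀ ht.ne', one_smul] at this
    · exact hCc _ ht _
  have hmemX : (τ * ‖(tX τ) • w‖) • v + (((tX τ) • w : (ℝ ∙ v)ᗮ) : E) ∈ X ↔ ‖w‖ ≤ 1 := by
    rw [hXt τ hτ, norm_smul, Real.norm_of_nonneg ht.le]
    constructor
    · intro h; exact le_of_mul_le_mul_left (by linarith) ht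
    · intro h; nlinarith
  have : ((tX τ) • w ∈ {w : (ℝ ∙ v)ᗮ | (τ * ‖w‖) • v + (w : E) ∈ X ∩ C}) ↔
      (w ∈ {w : (ℝ ∙ v)ᗮ | ‖w‖ ≤ 1 ∧ (τ * ‖w‖) • v + (w : E) ∈ C}) :=
    and_congr hmemX hmemC
  by_cases h : w ∈ {w : (ℝ ∙ v)ᗮ | ‖w‖ ≤ 1 ∧ (τ * ‖w‖) • v + (w : E) ∈ C}
  · rw [indicator_of_mem h, indicator_of_mem (this.2 h)]; rfl
  · rw [indicator_of_notMem h, indicator_of_notMem (fun h' => h (this.1 h'))]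

/-- The key comparison inside a cone. -/
lemma cone_compare (v : E) (hv : ‖v‖ = 1) [Nontrivial (ℝ ∙ v)ᗮ] {X B C : Set E}
    (hX : MeasurableSet X) (hB : MeasurableSet B)
    (hC : MeasurableSet C) (hCc : ∀ l : ℝ, 0 < l → ∀ z ∈ C, l • z ∈ C)
    (hCv : ∀ l : ℝ, 0 ≤ l → ∀ z ∈ C, l • v + z ∈ C) {tX tB : ℝ → ℝ}
    (htXm : Measurable tX) (htBm : Measurable tB)
    (htX : ∀ τ, 0 < tX τ) (htB : ∀ τ, 0 < tB τ)
    (hXt : ∀ τ, 0 < τ → ∀ w : (ℝ ∙ v)ᗮ, (τ * ‖w‖) • v + (w : E) ∈ X ↔ ‖w‖ ≤ tX τ)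
    (hBt : ∀ τ, 0 < τ → ∀ w : (ℝ ∙ v)ᗮ, (τ * ‖w‖) • v + (w : E) ∈ B ↔ ‖w‖ ≤ tB τ)
    (hmono : ∀ τ, 0 < τ → ∀ σ, 0 < σ → τ ≤ σ → tX τ * tB σ ≤ tX σ * tB τ) :
    volume (X ∩ {z | 0 < ⟪v, z⟫}) * volume (B ∩ C ∩ {z | 0 < ⟪v, z⟫}) ≤
      volume (X ∩ C ∩ {z | 0 < ⟪v, z⟫}) * volume (B ∩ {z | 0 < ⟪v, z⟫}) := by
  have hX' := coneVol v hv hX MeasurableSet.univ (fun _ _ _ _ => mem_univ _) htX hXt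
  have hB' := coneVol v hv hB MeasurableSet.univ (fun _ _ _ _ => mem_univ _) htB hBt
  rw [inter_univ] at hX' hB'
  rw [hX', hB', coneVol v hv hX hC hCc htX hXt, coneVol v hv hB hC hCc htB hBt]
  have hku : ∀ τ, kap v (univ : Set E) τ = kap v (univ : Set E) 0 := by
    intro τ; simp [kap]
  set n := Module.finrank ℝ (ℝ ∙ v)ᗮ + 1 with hn
  have hTm : Measurable (fun τ => ENNReal.ofReal (tX τ ^ n)) := (htXm.pow_const n).ennreal_ofReal
  have hbm : Measurable (fun τ => ENNReal.ofReal (tB τ ^ n)) := (htBm.pow_const n).ennreal_ofReal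
  simp_rw [hku]
  rw [lintegral_mul_const _ hTm, lintegral_mul_const _ hbm]
  have hch := chebyshev_lintegral (μ := volume.restrict (Ioi (0 : ℝ))) hTm hbm (kap_measurable v hC)
    (I := Ioi 0) (ae_restrict_mem measurableSet_Ioi) ?_ ?_
  · calc _ = kap v (univ : Set E) 0 * ((∫⁻ τ in Ioi (0 : ℝ), ENNReal.ofReal (tX τ ^ n)) *
          ∫⁻ τ in Ioi (0 : ℝ), ENNReal.ofReal (tB τ ^ n) * kap v C τ) := by ring
      _ ≤ kap v (univ : Set E) 0 * ((∫⁻ τ in Ioi (0 : ℝ), ENNReal.ofReal (tX τ ^ n) * kap v C τ) *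
          ∫⁻ τ in Ioi (0 : ℝ), ENNReal.ofReal (tB τ ^ n)) := by gcongr
      _ = _ := by ring
  · intro τ hτ σ hσ h
    have h1 := (htX τ).le
    have h2 := (htX σ).le
    have h3 := (htB τ).le
    have h4 := (htB σ).le
    rw [← ENNReal.ofReal_mul (by positivity), ← ENNReal.ofReal_mul (by positivity), ← mul_pow,
      ← mul_pow]
    refine ENNReal.ofReal_le_ofReal (pow_le_pow_left₀ (by positivity) (hmono τ hτ σ hσ h) n)
  · intro τ hτ σ hσ h
    refine lintegral_mono fun w => ?_
    refine mul_le_mul_right ?_ _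
    refine indicator_le_indicator_of_subset ?_ (fun _ => zero_le) w
    rintro w ⟨hw1, hw2⟩
    refine ⟨hw1, ?_⟩
    have := hCv ((σ - τ) * ‖w‖) (mul_nonneg (by linarith) (norm_nonneg _)) _ hw2
    rw [← add_assoc, ← add_smul] at this
    convert this using 3
    ring

end Cone

section Spin

variable {E : Type*} [NormedAddCommGroup E] [InnerProductSpace ℝ E] [FiniteDimensional ℝ E]
  [MeasurableSpace E] [BorelSpace E]

/-- The solid of revolution with axis `v` comparable to the spindle. -/
def TT (s R : ℝ) (v : E) : Set E :=
  {z | ‖z‖ ^ 2 + 2 * s * √(‖z‖ ^ 2 - ⟪v, z⟫ ^ 2) ≤ R ^ 2}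

lemma TT_closed (s R : ℝ) (v : E) : IsClosed (TT s R v) :=
  isClosed_le (by fun_prop) continuous_const

lemma hyperplane_null {a : E} (ha : a ≠ 0) : volume {z : E | ⟪a, z⟫ = 0} = 0 := by
  have h : {z : E | ⟪a, z⟫ = 0} = ((ℝ ∙ a)ᗮ : Submodule ℝ E) := by
    ext z
    exact Submodule.mem_orthogonal_singleton_iff_inner_right.symm
  rw [h]
  refine Measure.addHaar_submodule _ _ ?_
  intro htop
  have : a ∈ (ℝ ∙ a)ᗮ := htop ▸ Submodule.mem_top
  rw [Submodule.mem_orthogonal_singleton_iff_inner_right] at this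
  exact ha (inner_self_eq_zero.1 this)

lemma norm_decomp (v : E) (hv : ‖v‖ = 1) (t : ℝ) (w : (ℝ ∙ v)ᗮ) :
    ‖t • v + (w : E)‖ ^ 2 = t ^ 2 + ‖w‖ ^ 2 := by
  have hw : ⟪v, (w : E)⟫ = 0 := Submodule.mem_orthogonal_singleton_iff_inner_right.1 w.2
  rw [norm_add_sq_real, inner_smul_left, hw, norm_smul, hv]
  simp

lemma TT_slice {s R : ℝ} (hs : 0 < s) (hR : 0 < R) (v : E) (hv : ‖v‖ = 1) (τ : ℝ) (w : (ℝ ∙ v)ᗮ) :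
    (τ * ‖w‖) • v + (w : E) ∈ TT s R v ↔ ‖w‖ ≤ R ^ 2 / (s + √(s ^ 2 + (1 + τ ^ 2) * R ^ 2)) := by
  unfold TT
  rw [mem_ofPred_eq, inner_decomp v hv, norm_decomp v hv]
  have h1 : (τ * ‖w‖) ^ 2 + ‖w‖ ^ 2 - (τ * ‖w‖) ^ 2 = ‖w‖ ^ 2 := by ring
  rw [h1, Real.sqrt_sq (norm_nonneg _)]
  set m := ‖w‖
  have hm : 0 ≤ m := norm_nonneg _
  set q := √(s ^ 2 + (1 + τ ^ 2) * R ^ 2) with hq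
  have hq2 : q ^ 2 = s ^ 2 + (1 + τ ^ 2) * R ^ 2 := Real.sq_sqrt (by positivity)
  have hqs : s < q := Real.lt_sqrt_of_sq_lt (by nlinarith [sq_nonneg τ, sq_pos_of_pos hR, mul_nonneg (sq_nonneg τ) (sq_nonneg R)])
  rw [le_div_iff₀ (by linarith)]
  have hR2 : 0 < R ^ 2 := by positivity
  have hf : R ^ 2 * ((τ * m) ^ 2 + m ^ 2 + 2 * s * m - R ^ 2) =
      (m * (s + q) - R ^ 2) * ((q - s) * m + R ^ 2) := by
    linear_combination m ^ 2 * (-hq2)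
  have hpos : 0 < (q - s) * m + R ^ 2 := by
    have := mul_nonneg (sub_nonneg.2 hqs.le) hm
    linarith
  constructor
  · intro h
    by_contra hc
    push Not at hc
    have : 0 < (m * (s + q) - R ^ 2) * ((q - s) * m + R ^ 2) := mul_pos (by linarith) hpos
    rw [← hf] at this
    have := (mul_pos_iff_of_pos_left hR2).1 this
    linarith
  · intro h
    by_contra hc
    push Not at hc
    have : 0 < R ^ 2 * ((τ * m) ^ 2 + m ^ 2 + 2 * s * m - R ^ 2) := mul_pos hR2 (by linarith)
    rw [hf] at this
    have := (mul_pos_iff_of_pos_right hpos).1 this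
    linarith

lemma ball_slice (v : E) (hv : ‖v‖ = 1) (τ : ℝ) (w : (ℝ ∙ v)ᗮ) :
    (τ * ‖w‖) • v + (w : E) ∈ closedBall (0 : E) 1 ↔ ‖w‖ ≤ 1 / √(1 + τ ^ 2) := by
  rw [mem_closedBall_zero_iff, ← sq_le_one_iff₀ (norm_nonneg _), norm_decomp v hv,
    le_div_iff₀ (by positivity), ← sq_le_one_iff₀ (a := ‖w‖ * √(1 + τ ^ 2)) (by positivity),
    mul_pow ‖w‖, Real.sq_sqrt (by positivity)]
  have : (τ * ‖w‖) ^ 2 + ‖w‖ ^ 2 = ‖w‖ ^ 2 * (1 + τ ^ 2) := by ring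
  rw [this]

lemma slice_mono {s R : ℝ} (hs : 0 < s) (hR : 0 < R) {τ σ : ℝ} (hτ : 0 < τ) (h : τ ≤ σ) :
    R ^ 2 / (s + √(s ^ 2 + (1 + τ ^ 2) * R ^ 2)) * (1 / √(1 + σ ^ 2)) ≤
    R ^ 2 / (s + √(s ^ 2 + (1 + σ ^ 2) * R ^ 2)) * (1 / √(1 + τ ^ 2)) := by
  have hgh : 1 + τ ^ 2 ≤ 1 + σ ^ 2 := by nlinarith
  have h1 : √(1 + τ ^ 2) ≤ √(1 + σ ^ 2) := Real.sqrt_le_sqrt hgh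
  have h2 : √(1 + τ ^ 2) * √(s ^ 2 + (1 + σ ^ 2) * R ^ 2) ≤
      √(1 + σ ^ 2) * √(s ^ 2 + (1 + τ ^ 2) * R ^ 2) := by
    rw [← Real.sqrt_mul (by positivity), ← Real.sqrt_mul (by positivity)]
    refine Real.sqrt_le_sqrt ?_
    nlinarith [mul_le_mul_of_nonneg_right hgh (sq_nonneg s)]
  rw [div_mul_div_comm, div_mul_div_comm]
  refine div_le_div_of_nonneg_left (by positivity) (by positivity) ?_
  nlinarith

lemma vol_half (v : E) (hv : ‖v‖ = 1) {Y : Set E} (hY : MeasurableSet Y)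
    (hsym : ∀ z, -z ∈ Y ↔ z ∈ Y) : volume Y = 2 * volume (Y ∩ {z | 0 < ⟪v, z⟫}) := by
  have hH : MeasurableSet {z : E | 0 < ⟪v, z⟫} :=
    (isOpen_lt continuous_const (by fun_prop)).measurableSet
  have hneg : volume (Y ∩ {z | 0 < ⟪v, z⟫}) = volume (Y ∩ {z | ⟪v, z⟫ < 0}) := by
    rw [← Measure.measure_neg]
    congr 1
    ext z
    have : z ∈ -(Y ∩ {z | 0 < ⟪v, z⟫}) ↔ (-z ∈ Y ∧ 0 < ⟪v, -z⟫) := Iff.rfl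
    rw [this, hsym, inner_neg_right, neg_pos]
    rfl
  have hdiff : volume (Y \ {z | 0 < ⟪v, z⟫}) = volume (Y ∩ {z | ⟪v, z⟫ < 0}) := by
    have hn := hyperplane_null (a := v) (by rintro rfl; simp at hv)
    apply le_antisymm
    · calc _ ≤ volume ((Y ∩ {z | ⟪v, z⟫ < 0}) ∪ {z : E | ⟪v, z⟫ = 0}) := by
            apply measure_mono
            rintro z ⟨hz, hz'⟩
            rcases lt_or_eq_of_le (not_lt.1 hz' : ⟪v, z⟫ ≤ 0) with h | h
            · exact Or.inl ⟨hz, h⟩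
            · exact Or.inr h
        _ ≤ _ := measure_union_le _ _
        _ = _ := by rw [hn, add_zero]
    · apply measure_mono
      rintro z ⟨hz, hz'⟩
      exact ⟨hz, fun h : 0 < ⟪v, z⟫ => absurd (hz' : ⟪v, z⟫ < 0) (not_lt.2 h.le)⟩
  rw [← measure_inter_add_diff Y hH, hdiff, ← hneg, two_mul]

lemma TT_symm (s R : ℝ) (v z : E) : -z ∈ TT s R v ↔ z ∈ TT s R v := by
  simp [TT]

lemma TT_compare {s R : ℝ} (hs : 0 < s) (hR : 0 < R) (v : E) (hv : ‖v‖ = 1)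
    [Nontrivial (ℝ ∙ v)ᗮ] {C : Set E}
    (hC : MeasurableSet C) (hCc : ∀ l : ℝ, 0 < l → ∀ z ∈ C, l • z ∈ C)
    (hCv : ∀ l : ℝ, 0 ≤ l → ∀ z ∈ C, l • v + z ∈ C) (hCp : ∀ z ∈ C, 0 ≤ ⟪v, z⟫) :
    volume (TT s R v) * volume (closedBall (0 : E) 1 ∩ C) ≤
      volume (TT s R v ∩ C) * volume (closedBall (0 : E) 1) := by
  have h := cone_compare v hv (TT_closed s R v).measurableSet
    (isClosed_closedBall (x := (0 : E)) (ε := 1)).measurableSet hC hCc hCv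
    (tX := fun τ => R ^ 2 / (s + √(s ^ 2 + (1 + τ ^ 2) * R ^ 2)))
    (tB := fun τ => 1 / √(1 + τ ^ 2)) (by fun_prop) (by fun_prop)
    (fun τ => by positivity) (fun τ => by positivity)
    (fun τ _ w => TT_slice hs hR v hv τ w) (fun τ _ w => ball_slice v hv τ w)
    (fun τ hτ σ _ h => slice_mono hs hR hτ h)
  have hn := hyperplane_null (a := v) (by rintro rfl; simp at hv)
  have hBC : volume (closedBall (0 : E) 1 ∩ C) ≤
      volume (closedBall (0 : E) 1 ∩ C ∩ {z | 0 < ⟪v, z⟫}) := by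
    calc _ ≤ volume ((closedBall (0 : E) 1 ∩ C ∩ {z | 0 < ⟪v, z⟫}) ∪ {z : E | ⟪v, z⟫ = 0}) := by
            apply measure_mono
            rintro z hz
            rcases lt_or_eq_of_le (hCp z hz.2) with h | h
            · exact Or.inl ⟨hz, h⟩
            · exact Or.inr h.symm
        _ ≤ _ := measure_union_le _ _
        _ = _ := by rw [hn, add_zero]
  rw [vol_half v hv (TT_closed s R v).measurableSet (TT_symm s R v),
    vol_half v hv (isClosed_closedBall (x := (0 : E)) (ε := 1)).measurableSet (by simp)]
  calc _ ≤ 2 * (volume (TT s R v ∩ {z | 0 < ⟪v, z⟫}) *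
          volume (closedBall (0 : E) 1 ∩ C ∩ {z | 0 < ⟪v, z⟫})) := by
        rw [mul_assoc]; gcongr
    _ ≤ 2 * (volume (TT s R v ∩ C ∩ {z | 0 < ⟪v, z⟫}) *
          volume (closedBall (0 : E) 1 ∩ {z | 0 < ⟪v, z⟫})) := by gcongr
    _ = volume (TT s R v ∩ C ∩ {z | 0 < ⟪v, z⟫}) *
          (2 * volume (closedBall (0 : E) 1 ∩ {z | 0 < ⟪v, z⟫})) := by ring
    _ ≤ _ := mul_le_mul_left (measure_mono inter_subset_left) _

lemma TT_vol_eq (s R : ℝ) {v v' : E} (h : ‖v‖ = ‖v'‖) :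
    volume (TT s R v) = volume (TT s R v') := by
  have hr : hrefl (v - v') v = v' := by
    unfold hrefl; exact Submodule.reflection_sub h
  have hp := (hrefl (v - v')).measurePreserving.measure_preimage
    (TT_closed s R v').measurableSet.nullMeasurableSet
  rw [← hp]
  congr 1
  ext z
  have h1 : ⟪v', hrefl (v - v') z⟫ = ⟪v, z⟫ := by
    have := (hrefl (v - v')).inner_map_map v z
    rwa [hr] at this
  simp only [TT, mem_preimage, mem_ofPred_eq, h1, LinearIsometryEquiv.norm_map]

lemma TT_vol_pos {s R : ℝ} (hs : 0 < s) (hR : 0 < R) (v : E) : 0 < volume (TT s R v) := by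
  have hc : Continuous (fun z : E => ‖z‖ ^ 2 + 2 * s * √(‖z‖ ^ 2 - ⟪v, z⟫ ^ 2)) := by fun_prop
  have ho : IsOpen {z : E | ‖z‖ ^ 2 + 2 * s * √(‖z‖ ^ 2 - ⟪v, z⟫ ^ 2) < R ^ 2} :=
    isOpen_lt hc continuous_const
  refine lt_of_lt_of_le (ho.measure_pos volume ⟨0, ?_⟩) (measure_mono ?_)
  · simp; positivity
  · intro z hz; exact (show ‖z‖ ^ 2 + 2 * s * √(‖z‖ ^ 2 - ⟪v, z⟫ ^ 2) < R ^ 2 from hz).le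

end Spin

section Core

variable {E : Type*} [NormedAddCommGroup E] [InnerProductSpace ℝ E] [FiniteDimensional ℝ E]
  [MeasurableSpace E] [BorelSpace E]

lemma perp_part (v : E) (hv : ‖v‖ = 1) (z : E) :
    ‖z - ⟪v, z⟫ • v‖ = √(‖z‖ ^ 2 - ⟪v, z⟫ ^ 2) := by
  have h : ‖z - ⟪v, z⟫ • v‖ ^ 2 = ‖z‖ ^ 2 - ⟪v, z⟫ ^ 2 := by
    rw [norm_sub_sq_real, inner_smul_right, real_inner_comm, norm_smul, hv, mul_one,
      Real.norm_eq_abs, sq_abs, real_inner_comm]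
    ring
  rw [← h, Real.sqrt_sq (norm_nonneg _)]

lemma TT_hull {s R r : ℝ} (hs : 0 < s) (hR : 0 < R) (hr : 0 < r) (hsr : s ^ 2 + R ^ 2 = r ^ 2)
    (v : E) (hv : ‖v‖ = 1) {z y : E} (hz : z ∈ TT s R v) (hzv : 0 ≤ ⟪v, z⟫)
    (hy : ‖y‖ ^ 2 ≤ s ^ 2) (hy2 : ‖y‖ ^ 2 - 2 * (R * ⟪v, y⟫) ≤ s ^ 2) : ‖z - y‖ ≤ r := by
  have hz' : ‖z‖ ^ 2 + 2 * s * √(‖z‖ ^ 2 - ⟪v, z⟫ ^ 2) ≤ R ^ 2 := hz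
  rw [← perp_part v hv] at hz'
  have hcs := abs_le.1 (abs_real_inner_le_norm (z - ⟪v, z⟫ • v) y)
  rw [inner_sub_left, inner_smul_left] at hcs
  simp only [conj_trivial] at hcs
  set a := ⟪v, z⟫
  set b := ⟪v, y⟫
  set m := ‖z - a • v‖
  have hm : 0 ≤ m := norm_nonneg _
  have hys : ‖y‖ ≤ s := abs_le_of_sq_le_sq' hy hs.le |>.2
  have hmy : m * ‖y‖ ≤ m * s := mul_le_mul_of_nonneg_left hys hm
  refine abs_le_of_sq_le_sq' ?_ hr.le |>.2
  rw [norm_sub_sq_real, ← hsr]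
  rcases le_total 0 b with hb | hb
  · nlinarith [mul_nonneg hzv hb]
  · have haz : a ≤ ‖z‖ := by
      have := real_inner_le_norm v z
      rwa [hv, one_mul] at this
    have hzR : ‖z‖ ≤ R := abs_le_of_sq_le_sq' (by nlinarith [mul_nonneg hs.le hm]) hR.le |>.2
    nlinarith [mul_nonneg (sub_nonneg.2 (haz.trans hzR)) (neg_nonneg.2 hb)]

lemma hull_TT {s R r : ℝ} (hs : 0 < s) (hR : 0 < R) (hr : 0 < r) (hsr : s ^ 2 + R ^ 2 = r ^ 2)
    (v : E) (hv : ‖v‖ = 1) [Nontrivial (ℝ ∙ v)ᗮ] {z : E}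
    (hz : ∀ y : E, ‖R • v - y‖ ≤ r → ‖-(R • v) - y‖ ≤ r → ‖z - y‖ ≤ r) : z ∈ TT s R v := by
  have key : ∃ e : E, ‖e‖ = 1 ∧ ⟪v, e⟫ = 0 ∧ ⟪z, e⟫ = -‖z - ⟪v, z⟫ • v‖ := by
    by_cases hw : z - ⟪v, z⟫ • v = 0
    · obtain ⟨w, hw0⟩ := exists_ne (0 : (ℝ ∙ v)ᗮ)
      have hvw : ⟪v, (w : E)⟫ = 0 := Submodule.mem_orthogonal_singleton_iff_inner_right.1 w.2
      have hn : ‖(w : E)‖ ≠ 0 := by simpa using hw0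
      refine ⟨‖(w : E)‖⁻¹ • (w : E), ?_, ?_, ?_⟩
      · rw [norm_smul, norm_inv, norm_norm, inv_mul_cancel₀ hn]
      · rw [inner_smul_right, hvw, mul_zero]
      · rw [hw, norm_zero, neg_zero, sub_eq_zero.1 hw, inner_smul_left, inner_smul_right, hvw]
        simp
    · have hn : ‖z - ⟪v, z⟫ • v‖ ≠ 0 := by simpa using hw
      have hvw : ⟪v, z - ⟪v, z⟫ • v⟫ = 0 := by
        rw [inner_sub_right, inner_smul_right, real_inner_self_eq_norm_sq, hv]; ring
      have hzw : ⟪z, z - ⟪v, z⟫ • v⟫ = ‖z - ⟪v, z⟫ • v‖ ^ 2 := by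
        rw [← real_inner_self_eq_norm_sq]
        conv_rhs => rw [inner_sub_left, inner_smul_left, hvw]
        simp
      refine ⟨-(‖z - ⟪v, z⟫ • v‖⁻¹ • (z - ⟪v, z⟫ • v)), ?_, ?_, ?_⟩
      · rw [norm_neg, norm_smul, norm_inv, norm_norm, inv_mul_cancel₀ hn]
      · rw [inner_neg_right, inner_smul_right, hvw, mul_zero, neg_zero]
      · rw [inner_neg_right, inner_smul_right, hzw]
        field_simp
  obtain ⟨e, he1, hve, hze⟩ := key
  have h1 : ‖R • v - s • e‖ ≤ r := by
    refine abs_le_of_sq_le_sq' ?_ hr.le |>.2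
    rw [norm_sub_sq_real, inner_smul_left, inner_smul_right, hve, norm_smul, norm_smul, hv, he1,
      ← hsr, Real.norm_of_nonneg hR.le, Real.norm_of_nonneg hs.le]
    simp; linarith
  have h2 : ‖-(R • v) - s • e‖ ≤ r := by
    refine abs_le_of_sq_le_sq' ?_ hr.le |>.2
    rw [norm_sub_sq_real, inner_neg_left, inner_smul_left, inner_smul_right, hve, norm_neg,
      norm_smul, norm_smul, hv, he1,
      ← hsr, Real.norm_of_nonneg hR.le, Real.norm_of_nonneg hs.le]
    simp; linarith
  have h3 := pow_le_pow_left₀ (norm_nonneg _) (hz _ h1 h2) 2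
  rw [norm_sub_sq_real, inner_smul_right, hze, norm_smul, he1, Real.norm_of_nonneg hs.le, ← hsr,
    perp_part v hv] at h3
  show ‖z‖ ^ 2 + 2 * s * √(‖z‖ ^ 2 - ⟪v, z⟫ ^ 2) ≤ R ^ 2
  linarith

lemma nontrivial_orth (hd : 2 ≤ Module.finrank ℝ E) (v : E) : Nontrivial (ℝ ∙ v)ᗮ := by
  have h1 := Submodule.finrank_add_finrank_orthogonal (ℝ ∙ v)
  have h2 : Module.finrank ℝ (ℝ ∙ v) ≤ 1 := by
    have := finrank_span_le_card (R := ℝ) ({v} : Set E)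
    simpa using this
  exact Module.nontrivial_of_finrank_pos (R := ℝ) (by omega)

lemma core_vol (hd : 2 ≤ Module.finrank ℝ E) {s R r : ℝ} (hs : 0 < s) (hR : 0 < R) (hr : 0 < r)
    (hsr : s ^ 2 + R ^ 2 = r ^ 2) {Q : Finset E} (hQ : ∀ p ∈ Q, ‖p‖ = R)
    (hmin : ∀ u, ∃ p ∈ Q, 0 ≤ ⟪p, u⟫) {K : Set E}
    (hK : ∀ z, (∀ y, (∀ p ∈ Q, ‖p - y‖ ≤ r) → ‖z - y‖ ≤ r) → z ∈ K)
    (v : E) (hv : ‖v‖ = 1) : volume (TT s R v) ≤ volume K := by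
  classical
  let C : E → Set E := fun p => {u | ∀ q ∈ Q, ⟪q, u⟫ ≤ ⟪p, u⟫}
  have hCcl : ∀ p, IsClosed (C p) := by
    intro p
    have : C p = ⋂ q ∈ Q, {u | ⟪q, u⟫ ≤ ⟪p, u⟫} := by ext u; simp [C]
    rw [this]
    exact isClosed_biInter fun q _ => isClosed_le (by fun_prop) (by fun_prop)
  have hCp : ∀ p, ∀ u ∈ C p, 0 ≤ ⟪p, u⟫ := by
    intro p u hu
    obtain ⟨q, hq, h⟩ := hmin u
    exact h.trans (hu q hq)
  have hunit : ∀ p ∈ Q, ‖R⁻¹ • p‖ = 1 := by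
    intro p hp
    rw [norm_smul, hQ p hp, Real.norm_of_nonneg (by positivity), inv_mul_cancel₀ hR.ne']
  have hcmp : ∀ p ∈ Q, volume (TT s R v) * volume (closedBall (0 : E) 1 ∩ C p) ≤
      volume (TT s R (R⁻¹ • p) ∩ C p) * volume (closedBall (0 : E) 1) := by
    intro p hp
    haveI := nontrivial_orth hd (R⁻¹ • p)
    rw [TT_vol_eq s R (hv.trans (hunit p hp).symm)]
    refine TT_compare hs hR _ (hunit p hp) (hCcl p).measurableSet ?_ ?_ ?_
    · intro l hl z hz q hq
      rw [inner_smul_right, inner_smul_right]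
      exact mul_le_mul_of_nonneg_left (hz q hq) hl.le
    · intro l hl z hz q hq
      rw [inner_add_right, inner_add_right]
      refine add_le_add ?_ (hz q hq)
      rw [inner_smul_right, inner_smul_right, inner_smul_right, inner_smul_right]
      refine mul_le_mul_of_nonneg_left (mul_le_mul_of_nonneg_left ?_ (by positivity)) hl
      calc _ ≤ ‖q‖ * ‖p‖ := real_inner_le_norm _ _
        _ = ‖p‖ ^ 2 := by rw [hQ q hq, hQ p hp]; ring
        _ = _ := (real_inner_self_eq_norm_sq p).symm
    · intro z hz
      rw [inner_smul_left]
      exact mul_nonneg (by simpa using hR.le) (hCp p z hz)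
  have hcov : closedBall (0 : E) 1 ⊆ ⋃ p ∈ Q, closedBall (0 : E) 1 ∩ C p := by
    intro u hu
    have hne : Q.Nonempty := by obtain ⟨p, hp, _⟩ := hmin 0; exact ⟨p, hp⟩
    obtain ⟨p, hp, hmax⟩ := Q.exists_max_image (fun q => ⟪q, u⟫) hne
    exact mem_biUnion hp ⟨hu, hmax⟩
  have hdis : (Q : Set E).Pairwise
      (Function.onFun (AEDisjoint volume) (fun p => TT s R (R⁻¹ • p) ∩ C p)) := by
    intro p hp q hq hpq
    refine measure_mono_null ?_ (hyperplane_null (a := p - q) (sub_ne_zero.2 hpq))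
    rintro u ⟨⟨_, hu1⟩, ⟨_, hu2⟩⟩
    show ⟪p - q, u⟫ = 0
    rw [inner_sub_left]
    linarith [hu1 q hq, hu2 p hp]
  have hsub : (⋃ p ∈ Q, TT s R (R⁻¹ • p) ∩ C p) ⊆ K := by
    intro z hz
    simp only [mem_iUnion] at hz
    obtain ⟨p, hp, hzT, hzC⟩ := hz
    apply hK
    intro y hy
    have hexp : ∀ q ∈ Q, ‖y‖ ^ 2 - 2 * ⟪q, y⟫ ≤ s ^ 2 := by
      intro q hq
      have := pow_le_pow_left₀ (norm_nonneg _) (hy q hq) 2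
      rw [norm_sub_sq_real, hQ q hq] at this
      linarith
    refine TT_hull hs hR hr hsr (R⁻¹ • p) (hunit p hp) hzT ?_ ?_ ?_
    · rw [inner_smul_left]
      exact mul_nonneg (by simpa using hR.le) (hCp p z hzC)
    · obtain ⟨q, hq, h⟩ := hmin (-y)
      rw [inner_neg_right] at h
      linarith [hexp q hq]
    · rw [inner_smul_left]
      have : R * ((starRingEnd ℝ) R⁻¹ * ⟪p, y⟫) = ⟪p, y⟫ := by
        simp only [conj_trivial]; field_simp
      rw [this]
      exact hexp p hp
  have hB0 : volume (closedBall (0 : E) 1) ≠ 0 := (measure_closedBall_pos _ _ one_pos).ne'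
  have hBt : volume (closedBall (0 : E) 1) ≠ ⊤ := measure_closedBall_lt_top.ne
  refine (ENNReal.mul_le_mul_iff_left hB0 hBt).1 ?_
  calc volume (TT s R v) * volume (closedBall (0 : E) 1)
      ≤ volume (TT s R v) * ∑ p ∈ Q, volume (closedBall (0 : E) 1 ∩ C p) := by
        gcongr
        exact (measure_mono hcov).trans (measure_biUnion_finset_le _ _)
    _ ≤ (∑ p ∈ Q, volume (TT s R (R⁻¹ • p) ∩ C p)) * volume (closedBall (0 : E) 1) := by
        rw [Finset.mul_sum, Finset.sum_mul]
        exact Finset.sum_le_sum hcmp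
    _ = volume (⋃ p ∈ Q, TT s R (R⁻¹ • p) ∩ C p) * volume (closedBall (0 : E) 1) := by
        rw [measure_biUnion_finset₀ hdis]
        intro p _
        exact ((TT_closed _ _ _).inter (hCcl p)).measurableSet.nullMeasurableSet
    _ ≤ _ := mul_le_mul_left (measure_mono hsub) _

end Core

section Final

lemma mem_ballHull_iff {d : ℕ} {r : ℝ} {X : Set (EuclideanSpace ℝ (Fin d))}
    {z : EuclideanSpace ℝ (Fin d)} :
    z ∈ ballHull r X ↔ ∀ y, (∀ p ∈ X, ‖p - y‖ ≤ r) → ‖z - y‖ ≤ r := by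
  unfold ballHull
  simp only [mem_iInter, mem_ofPred_eq, subset_def, mem_closedBall, dist_eq_norm]

lemma circum_min {d : ℕ} {r₀ : ℝ} {P : Set (EuclideanSpace ℝ (Fin d))} (hPfin : P.Finite)
    (hne : P.Nonempty)
    (hmin : ∀ ρ, (∃ cc : EuclideanSpace ℝ (Fin d), P ⊆ closedBall cc ρ) → r₀ ≤ ρ)
    {cc : EuclideanSpace ℝ (Fin d)} (hcc : P ⊆ closedBall cc r₀) (u : EuclideanSpace ℝ (Fin d)) :
    ∃ p ∈ P, ‖p - cc‖ = r₀ ∧ 0 ≤ ⟪p - cc, u⟫ := by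
  by_contra hcon
  push Not at hcon
  have hev : ∀ p ∈ P, ∀ᶠ t in nhdsWithin (0 : ℝ) (Ioi 0), ‖p - cc + t • u‖ < r₀ := by
    intro p hp
    have hle : ‖p - cc‖ ≤ r₀ := by simpa [dist_eq_norm] using hcc hp
    rcases lt_or_eq_of_le hle with h | h
    · have hc : Continuous (fun t : ℝ => ‖p - cc + t • u‖) := by fun_prop
      have := hc.tendsto 0
      simp only [zero_smul, add_zero] at this
      exact (this.eventually_lt_const h).filter_mono nhdsWithin_le_nhds
    · have h2 := hcon p hp h
      have hc : Continuous (fun t : ℝ => 2 * ⟪p - cc, u⟫ + t * ‖u‖ ^ 2) := by fun_prop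
      have h3 := (hc.tendsto 0).eventually_lt_const (u := 0) (by simp; linarith)
      filter_upwards [h3.filter_mono nhdsWithin_le_nhds, self_mem_nhdsWithin] with t ht ht0
      have ht0 : 0 < t := ht0
      refine abs_lt_of_sq_lt_sq' ?_ (by rw [← h]; positivity) |>.2
      rw [norm_add_sq_real, inner_smul_right, norm_smul, h, mul_pow, Real.norm_eq_abs, sq_abs]
      nlinarith
  have hall := (hPfin.eventually_all).2 hev
  obtain ⟨t, ht⟩ := hall.exists
  obtain ⟨p, hp, hpm⟩ := hPfin.exists_maximalFor (fun p => ‖p - cc + t • u‖) _ hne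
  have := hmin ‖p - cc + t • u‖ ⟨cc - t • u, fun q hq => by
    rw [mem_closedBall, dist_eq_norm]
    have : q - (cc - t • u) = q - cc + t • u := by abel
    rw [this]
    rcases le_total ‖q - cc + t • u‖ ‖p - cc + t • u‖ with h | h
    · exact h
    · exact hpm hq h⟩
  linarith [ht p hp]

lemma ballHull_vol {d : ℕ} (hd : 2 ≤ d) (r r₀ : ℝ) (hr : r₀ < r) (hr₀ : 0 < r₀)
    (P : Set (EuclideanSpace ℝ (Fin d))) (hPfin : P.Finite) (hne : P.Nonempty)
    (hcr : IsLeast {ρ : ℝ | ∃ cc : EuclideanSpace ℝ (Fin d), P ⊆ closedBall cc ρ} r₀)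
    (x : EuclideanSpace ℝ (Fin d)) (hx : ‖x‖ = r₀) :
    volume (ballHull r {x, -x}) ≤ volume (ballHull r P) ∧ 0 < volume (ballHull r P) := by
  classical
  obtain ⟨cc, hcc⟩ := hcr.1
  have hrp : 0 < r := hr₀.trans hr
  have hs2 : 0 < r ^ 2 - r₀ ^ 2 := by nlinarith
  set s := √(r ^ 2 - r₀ ^ 2) with hsdef
  have hs : 0 < s := Real.sqrt_pos.2 hs2
  have hsr : s ^ 2 + r₀ ^ 2 = r ^ 2 := by rw [hsdef, Real.sq_sqrt hs2.le]; ring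
  have hfr : 2 ≤ Module.finrank ℝ (EuclideanSpace ℝ (Fin d)) := by simpa using hd
  have hv : ‖r₀⁻¹ • x‖ = 1 := by
    rw [norm_smul, hx, Real.norm_of_nonneg (by positivity), inv_mul_cancel₀ hr₀.ne']
  haveI := nontrivial_orth hfr (r₀⁻¹ • x)
  let Q : Finset (EuclideanSpace ℝ (Fin d)) :=
    (hPfin.toFinset.image (fun p => p - cc)).filter (fun p => ‖p‖ = r₀)
  have hQmem : ∀ q, q ∈ Q ↔ (∃ p ∈ P, p - cc = q) ∧ ‖q‖ = r₀ := by
    intro q; simp [Q]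
  have hcore := core_vol hfr hs hr₀ hrp hsr (Q := Q) (K := (fun z => cc + z) ⁻¹' ballHull r P)
    (fun p hp => ((hQmem p).1 hp).2) ?_ ?_ (r₀⁻¹ • x) hv
  · rw [measure_preimage_add] at hcore
    refine ⟨(measure_mono ?_).trans hcore, (TT_vol_pos hs hr₀ _).trans_le hcore⟩
    intro z hz
    rw [mem_ballHull_iff] at hz
    refine hull_TT hs hr₀ hrp hsr _ hv ?_
    have hxx : r₀ • (r₀⁻¹ • x) = x := by rw [smul_smul, mul_inv_cancel₀ hr₀.ne', one_smul]
    rw [hxx]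
    intro y h1 h2
    apply hz y
    intro p hp
    rcases hp with rfl | hp
    · exact h1
    · rw [mem_singleton_iff.1 hp]; exact h2
  · intro u
    obtain ⟨p, hp, h1, h2⟩ := circum_min hPfin hne (fun ρ h => hcr.2 h) hcc u
    exact ⟨p - cc, (hQmem _).2 ⟨⟨p, hp, rfl⟩, h1⟩, h2⟩
  · intro z hz
    rw [mem_preimage, mem_ballHull_iff]
    intro y hy
    have := hz (y - cc) (fun q hq => by
      obtain ⟨⟨p, hp, rfl⟩, _⟩ := (hQmem q).1 hq
      have := hy p hp
      rwa [sub_sub_sub_cancel_right])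
    have he : cc + z - y = z - (y - cc) := by abel
    rwa [he]

lemma ballHull_compact {d : ℕ} {r : ℝ} {P : Set (EuclideanSpace ℝ (Fin d))}
    {cc : EuclideanSpace ℝ (Fin d)} (h : P ⊆ closedBall cc r) : IsCompact (ballHull r P) := by
  refine (isCompact_closedBall cc r).of_isClosed_subset ?_ ?_
  · exact isClosed_biInter fun y _ => isClosed_closedBall
  · exact biInter_subset_of_mem (s := {y | P ⊆ closedBall y r}) h

lemma ballHull_convex {d : ℕ} (r : ℝ) (P : Set (EuclideanSpace ℝ (Fin d))) :
    Convex ℝ (ballHull r P) :=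
  convex_iInter₂ fun y _ => convex_closedBall y r

end Final

/-- Lower bound for intrinsic volumes of r-ball convex hulls in terms of the
volume of the r-spindle of the same circumradius. -/
theorem intrinsicVolume_ballHull_ge (r r₀ : ℝ) (hr : r₀ < r) (hr₀ : 0 < r₀)
    (k : ℕ) (hk : 0 < k) (hkd : k < d)
    (P : Set (EuclideanSpace ℝ (Fin d))) (hPfin : P.Finite) (hcard : 1 < P.ncard)
    (hcr : IsLeast {ρ : ℝ | ∃ cc : EuclideanSpace ℝ (Fin d), P ⊆ closedBall cc ρ} r₀)
    (V : ℕ → Set (EuclideanSpace ℝ (Fin d)) → ℝ) (hV : IsIntrinsicVolumes d V)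
    (x : EuclideanSpace ℝ (Fin d)) (hx : ‖x‖ = r₀) :
    (d.choose k : ℝ) * unitBallVol d ^ ((1 : ℝ) - k / d) / unitBallVol (d - k) *
        (volume (ballHull r {x, -x})).toReal ^ ((k : ℝ) / d)
      ≤ V k (ballHull r P) := by
  have hne : P.Nonempty := nonempty_of_ncard_ne_zero (by omega)
  obtain ⟨hle, hpos⟩ := ballHull_vol (by omega) r r₀ hr hr₀ P hPfin hne hcr x hx
  obtain ⟨cc, hcc⟩ := hcr.1
  have hK : IsCompact (ballHull r P) :=
    ballHull_compact (hcc.trans (closedBall_subset_closedBall hr.le))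
  have hfin : volume (ballHull r P) ≠ ⊤ := hK.measure_lt_top.ne
  refine le_trans ?_ (extended_iso (by omega) hV hK (ballHull_convex r P)
    (ENNReal.toReal_pos hpos.ne' hfin) hkd.le)
  have h1 := unitBallVol_pos d
  have h2 := unitBallVol_pos (d - k)
  refine mul_le_mul_of_nonneg_left ?_ (by positivity)
  exact Real.rpow_le_rpow ENNReal.toReal_nonneg (ENNReal.toReal_mono hfin hle) (by positivity)
end

section
/- Let r > r₀ > 0 and let P ⊂ ℝ² be a finite set with circumradius r₀ such that conv_r P is nonempty. Then the perimeters satisfy: perimeter(conv_r P) + perimeter(P^r) = perimeter of a disk of radius r, i.e. 2πr; equivalently V₁(B²[o,r]) = V₁(conv_r P) + V₁(P^r). -/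
open Metric Set MeasureTheory Pointwise RealInnerProductSpace

variable {d : ℕ}

abbrev Pl : Type := EuclideanSpace ℝ (Fin 2)

/-- Open star-shaped set with radial function `f` (without the origin). -/
def starSet (f : sphere (0 : Pl) 1 → ℝ) : Set Pl :=
  {x | ∃ u : sphere (0 : Pl) 1, ∃ t : ℝ, 0 < t ∧ t < f u ∧ x = t • (u : Pl)}

/-- Support function. -/
noncomputable def supp (K : Set Pl) (u : Pl) : ℝ := sSup ((fun x => ⟪u, x⟫) '' K)

theorem volume_starSet (f : sphere (0 : Pl) 1 → ℝ) (hf : Continuous f) (hpos : ∀ u, 0 < f u) :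
    (volume (starSet f)) = ENNReal.ofReal
      (∫ u, (f u) ^ 2 / 2 ∂((volume : Measure Pl).toSphere)) := by
  set T : Set (sphere (0 : Pl) 1 × Ioi (0 : ℝ)) := {p | (p.2 : ℝ) < f p.1} with hT
  have hTo : IsOpen T := isOpen_lt (by fun_prop) (by fun_prop)
  have h1 : starSet f = (↑) '' (homeomorphUnitSphereProd Pl ⁻¹' T) := by
    rw [← Homeomorph.image_symm, image_image]
    ext x
    constructor
    · rintro ⟨u, t, ht, htf, rfl⟩
      exact ⟨(u, ⟨t, ht⟩), htf, by simp [homeomorphUnitSphereProd]⟩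
    · rintro ⟨⟨u, ⟨t, ht⟩⟩, htf, rfl⟩
      exact ⟨u, t, ht, htf, by simp [homeomorphUnitSphereProd]⟩
  have h2 := (Measure.measurePreserving_homeomorphUnitSphereProd
    (volume : Measure Pl)).measure_preimage hTo.measurableSet.nullMeasurableSet
  rw [comap_subtype_coe_apply (measurableSet_singleton _).compl] at h2
  rw [h1, h2, Measure.prod_apply hTo.measurableSet, ofReal_integral_eq_lintegral_ofReal]
  · apply lintegral_congr
    intro u
    have : Prod.mk u ⁻¹' T = Iio (⟨f u, hpos u⟩ : Ioi (0 : ℝ)) := by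
      ext t; simp [hT, ← Subtype.coe_lt_coe]
    rw [this, Measure.volumeIoiPow_apply_Iio]
    simp
    norm_num
  · have hc : Continuous fun u => (f u) ^ 2 / 2 := by fun_prop
    exact hc.integrable_of_hasCompactSupport (HasCompactSupport.of_compactSpace _)
  · exact Filter.Eventually.of_forall fun u => by positivity

theorem supp_cont (K : Set Pl) (hK : IsCompact K) : Continuous (supp K) := by
  apply IsCompact.continuous_sSup hK (f := fun u x => ⟪u, x⟫)
  simp only [Function.HasUncurry.uncurry]
  fun_prop

theorem supp_attained (K : Set Pl) (hK : IsCompact K) (hne : K.Nonempty) (u : Pl) :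
    ∃ a ∈ K, ⟪u, a⟫ = supp K u ∧ ∀ x ∈ K, ⟪u, x⟫ ≤ supp K u := by
  obtain ⟨a, ha, h1, h2⟩ := hK.exists_sSup_image_eq_and_ge hne
    (f := fun x => ⟪u, x⟫) (by fun_prop)
  exact ⟨a, ha, h1.symm, fun x hx => (h2 x hx).trans h1.ge⟩

theorem steiner_asymp (K : Set Pl) (hK : IsCompact K) (hne : K.Nonempty) :
    ∃ C ε₀ : ℝ, ∀ ε, ε₀ ≤ ε → 0 < ε ∧
      |(volume (K + ε • closedBall (0 : Pl) 1)).toReal - (unitBallVol 2 * ε ^ 2 +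
        ε * ∫ u : sphere (0 : Pl) 1, supp K u ∂((volume : Measure Pl).toSphere))| ≤ C := by
  obtain ⟨R', hR'⟩ := hK.isBounded.subset_closedBall (0 : Pl)
  set R := max R' 1 with hRdef
  have hR1 : 1 ≤ R := le_max_right _ _
  have hR : ∀ x ∈ K, ‖x‖ ≤ R := fun x hx => by
    have := hR' hx
    rw [mem_closedBall_zero_iff] at this
    exact this.trans (le_max_left _ _)
  set σ := (volume : Measure Pl).toSphere with hσ
  have hσu : σ.real univ = 2 * unitBallVol 2 := by
    rw [hσ, Measure.toSphere_real_apply_univ]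
    simp [unitBallVol, Measure.real, Measure.addHaar_closedBall_eq_addHaar_ball]
  have hsc : Continuous fun u : sphere (0 : Pl) 1 => supp K u :=
    (supp_cont K hK).comp continuous_subtype_val
  have hsb : ∀ u : sphere (0 : Pl) 1, |supp K u| ≤ R := by
    intro u
    obtain ⟨a, ha, h1, -⟩ := supp_attained K hK hne u
    rw [← h1]
    have := abs_real_inner_le_norm (u : Pl) a
    have hu : ‖(u : Pl)‖ = 1 := by simp
    rw [hu, one_mul] at this
    exact this.trans (hR a ha)
  set M := R ^ 2 / 2 + 2 * R ^ 2 + R ^ 4 / 2 with hM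
  have key : ∀ ε δ : ℝ, 2 * R ≤ ε → |δ| * ε ≤ R ^ 2 →
      |∫ u : sphere (0 : Pl) 1, (ε + supp K u + δ) ^ 2 / 2 ∂σ - (unitBallVol 2 * ε ^ 2 +
        ε * ∫ u : sphere (0 : Pl) 1, supp K u ∂σ)| ≤ M * σ.real univ := by
    intro ε δ hε hδ
    have hint : ∀ g : sphere (0 : Pl) 1 → ℝ, Continuous g → Integrable g σ := fun g hg =>
      hg.integrable_of_hasCompactSupport (HasCompactSupport.of_compactSpace _)
    have e1 : unitBallVol 2 * ε ^ 2 + ε * ∫ u : sphere (0 : Pl) 1, supp K u ∂σ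
        = ∫ u : sphere (0 : Pl) 1, (ε ^ 2 / 2 + ε * supp K u) ∂σ := by
      rw [integral_add (hint _ (by fun_prop)) (hint _ (by fun_prop)), integral_const_mul,
        integral_const, hσu, smul_eq_mul]
      ring
    rw [e1, ← integral_sub (hint _ (by fun_prop)) (hint _ (by fun_prop))]
    have := norm_integral_le_of_norm_le_const (μ := σ) (C := M)
      (f := fun u : sphere (0 : Pl) 1 => (ε + supp K u + δ) ^ 2 / 2 - (ε ^ 2 / 2 + ε * supp K u))
      (Filter.Eventually.of_forall fun u => ?_)
    · simpa [Real.norm_eq_abs] using this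
    · have hb := hsb u
      set h := supp K u
      have hε1 : 1 ≤ ε := by linarith
      have hδ1 : |δ| ≤ R ^ 2 := by nlinarith [abs_nonneg δ]
      have t1 : |h ^ 2 / 2| ≤ R ^ 2 / 2 := by
        rw [abs_of_nonneg (by positivity), ← sq_abs]
        gcongr
      have t2 : |(ε + h) * δ| ≤ 2 * R ^ 2 := by
        rw [abs_mul]
        have : |ε + h| ≤ 2 * ε := by
          have := abs_add_le ε h
          rw [abs_of_pos (by linarith : 0 < ε)] at this
          linarith
        nlinarith [abs_nonneg δ]
      have t3 : |δ ^ 2 / 2| ≤ R ^ 4 / 2 := by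
        rw [abs_of_nonneg (by positivity), ← sq_abs]
        have := pow_le_pow_left₀ (abs_nonneg δ) hδ1 2
        nlinarith
      rw [Real.norm_eq_abs, show (ε + h + δ) ^ 2 / 2 - (ε ^ 2 / 2 + ε * h)
        = h ^ 2 / 2 + (ε + h) * δ + δ ^ 2 / 2 by ring, hM]
      exact (abs_add_three _ _ _).trans (by linarith)
  refine ⟨M * σ.real univ, 2 * R + 2, fun ε hε => ⟨by linarith, ?_⟩⟩
  have hε0 : 0 < ε := by linarith
  have hd : R ^ 2 / ε * ε = R ^ 2 := by field_simp
  have hd0 : 0 < R ^ 2 / ε := by positivity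
  have hd1 : R ^ 2 / ε ≤ R / 2 := by
    rw [div_le_iff₀ hε0]; nlinarith
  set δ := R ^ 2 / ε with hδ
  have kp := key ε δ (by linarith) (by rw [abs_of_pos hd0]; exact hd.le)
  have km := key ε (-δ) (by linarith) (by rw [abs_neg, abs_of_pos hd0]; exact hd.le)
  have vp := volume_starSet (fun u => ε + supp K u + δ) (by fun_prop) (fun u => by
    have := (abs_le.1 (hsb u)).1; linarith)
  have vm := volume_starSet (fun u => ε + supp K u + -δ) (by fun_prop) (fun u => by
    have := (abs_le.1 (hsb u)).1; linarith)
  have sub1 : starSet (fun u => ε + supp K u + -δ) ⊆ K + ε • closedBall (0 : Pl) 1 := by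
    rintro x ⟨u, t, ht, htf, rfl⟩
    obtain ⟨a, ha, h1, -⟩ := supp_attained K hK hne u
    refine ⟨a, ha, t • (u : Pl) - a, ?_, by simp⟩
    rw [smul_unitClosedBall_of_nonneg hε0.le, mem_closedBall_zero_iff]
    have hb := abs_le.1 (hsb u)
    have hu : ‖(u : Pl)‖ = 1 := by simp
    have ha' := hR a ha
    have e : ‖t • (u : Pl) - a‖ ^ 2 = t ^ 2 - 2 * t * supp K u + ‖a‖ ^ 2 := by
      rw [norm_sub_sq_real, norm_smul, hu, real_inner_smul_left, h1, mul_one, Real.norm_eq_abs,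
        sq_abs]
      ring
    have ha2 : ‖a‖ ^ 2 ≤ R ^ 2 := pow_le_pow_left₀ (norm_nonneg _) ha' 2
    simp only at htf
    set h := supp K u
    have h3 : (t - h) ^ 2 ≤ (ε - δ) ^ 2 := by
      apply sq_le_sq'
      · linarith
      · linarith
    have h4 : ‖t • (u : Pl) - a‖ ^ 2 ≤ ε ^ 2 := by
      rw [e]
      nlinarith [sq_nonneg h]
    exact le_of_sq_le_sq h4 hε0.le
  have sub2 : K + ε • closedBall (0 : Pl) 1 ⊆ starSet (fun u => ε + supp K u + δ) ∪ {0} := by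
    rintro _ ⟨a, ha, b, hb, rfl⟩
    rw [smul_unitClosedBall_of_nonneg hε0.le, mem_closedBall_zero_iff] at hb
    simp only
    by_cases hx : a + b = 0
    · right; exact hx
    left
    have hn : 0 < ‖a + b‖ := norm_pos_iff.2 hx
    set u : sphere (0 : Pl) 1 := ⟨‖a + b‖⁻¹ • (a + b), by
      rw [mem_sphere_zero_iff_norm, norm_smul, norm_inv, norm_norm, inv_mul_cancel₀ hn.ne']⟩
      with hu
    have hu1 : ‖(u : Pl)‖ = 1 := by simp
    have hxu : a + b = ‖a + b‖ • (u : Pl) := by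
      simp [hu, smul_smul, hn.ne']
    refine ⟨u, ‖a + b‖, hn, ?_, hxu⟩
    obtain ⟨a', ha', -, h2⟩ := supp_attained K hK hne u
    have e : ‖a + b‖ = ⟪(u : Pl), a + b⟫ := by
      conv_rhs => rw [hxu, real_inner_smul_right, real_inner_self_eq_norm_sq, hu1]
      simp
    have e2 : ⟪(u : Pl), b⟫ ≤ ε := by
      have := real_inner_le_norm (u : Pl) b
      rw [hu1, one_mul] at this
      linarith
    rw [e, inner_add_right]
    have := h2 a ha
    simp only
    linarith
  have m1 := measure_mono (μ := (volume : Measure Pl)) sub1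
  have m2 : volume (K + ε • closedBall (0 : Pl) 1) ≤ volume (starSet (fun u => ε + supp K u + δ)) :=
    (measure_mono sub2).trans ((measure_union_le _ _).trans (by simp))
  rw [vm] at m1
  rw [vp] at m2
  have n1 := ENNReal.toReal_mono (m2.trans_lt ENNReal.ofReal_lt_top).ne m1
  have n2 := ENNReal.toReal_mono ENNReal.ofReal_ne_top m2
  rw [ENNReal.toReal_ofReal (integral_nonneg fun u => by positivity)] at n1 n2
  rw [abs_le] at *
  constructor <;> linarith [kp.1, kp.2, km.1, km.2]

theorem V1_eq (V : ℕ → Set Pl → ℝ) (hV : IsIntrinsicVolumes 2 V) (K L : Set Pl)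
    (hc : Convex ℝ K) (hK : IsCompact K) (hne : K.Nonempty) (hL : IsCompact L) (hLne : L.Nonempty)
    (hvol : ∀ ε : ℝ, 0 < ε → volume (K + ε • closedBall (0 : Pl) 1) =
      volume (L + ε • closedBall (0 : Pl) 1)) :
    unitBallVol 1 * V 1 K =
      ∫ u : sphere (0 : Pl) 1, supp L u ∂((volume : Measure Pl).toSphere) := by
  obtain ⟨C, ε₀, hC⟩ := steiner_asymp L hL hLne
  obtain ⟨hS, h0⟩ := hV K hc hK hne
  set I := ∫ u : sphere (0 : Pl) 1, supp L u ∂((volume : Measure Pl).toSphere)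
  have main : ∀ ε, ε₀ ≤ ε → |unitBallVol 1 * V 1 K - I| * ε ≤ C + |unitBallVol 0 * V 2 K| := by
    intro ε hε
    obtain ⟨hp, hb⟩ := hC ε hε
    have := hS ε hp
    rw [← hvol ε hp, this] at hb
    simp only [Finset.sum_range_succ, Finset.sum_range_zero, h0] at hb
    norm_num at hb
    have e0 : |unitBallVol 1 * V 1 K - I| * ε = |(unitBallVol 1 * V 1 K - I) * ε| := by
      rw [abs_mul, abs_of_pos hp]
    rw [e0]
    have e : (unitBallVol 1 * V 1 K - I) * ε = (unitBallVol 2 * ε ^ 2 + unitBallVol 1 * V 1 K * ε +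
      unitBallVol 0 * V 2 K - (unitBallVol 2 * ε ^ 2 + ε * I)) - unitBallVol 0 * V 2 K := by ring
    rw [e]
    exact (abs_sub _ _).trans (by linarith)
  by_contra hne'
  have hpos : 0 < |unitBallVol 1 * V 1 K - I| := abs_pos.2 (sub_ne_zero.2 hne')
  set D := |unitBallVol 1 * V 1 K - I|
  set C' := C + |unitBallVol 0 * V 2 K|
  have := main (max ε₀ ((C' + 1) / D)) (le_max_left _ _)
  have h2 : C' + 1 ≤ D * max ε₀ ((C' + 1) / D) := by
    rw [mul_comm, ← div_le_iff₀ hpos]; exact le_max_right _ _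
  linarith

theorem mem_ballBody' {r : ℝ} {X : Set Pl} {y : Pl} :
    y ∈ ballBody r X ↔ ∀ x ∈ X, ‖y - x‖ ≤ r := by
  simp [ballBody, dist_eq_norm]

theorem ballHull_eq (r : ℝ) (P : Set Pl) : ballHull r P = ballBody r (ballBody r P) := by
  have : {y : Pl | P ⊆ closedBall y r} = ballBody r P := by
    ext y
    rw [mem_ballBody']
    simp [subset_def, dist_eq_norm, norm_sub_rev]
  rw [ballHull, this]; rfl

theorem ballBody_convex (r : ℝ) (X : Set Pl) : Convex ℝ (ballBody r X) :=
  convex_iInter₂ fun x _ => convex_closedBall x r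

theorem ballBody_compact (r : ℝ) (X : Set Pl) (hX : X.Nonempty) : IsCompact (ballBody r X) := by
  obtain ⟨x, hx⟩ := hX
  exact (isCompact_closedBall x r).of_isClosed_subset
    (isClosed_biInter fun x _ => isClosed_closedBall) (biInter_subset_of_mem hx)

/-- A supporting half-plane of a ball body yields a supporting ball. -/
theorem support_ball (r : ℝ) (hr : 0 < r) (P : Set Pl) (u y : Pl) (hu : ‖u‖ = 1)
    (hy : y ∈ ballBody r P) (hmin : ∀ z ∈ ballBody r P, ⟪u, y⟫ ≤ ⟪u, z⟫) :
    y + r • u ∈ ballBody r (ballBody r P) := by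
  rw [mem_ballBody']
  intro z hz
  by_contra hlt
  push Not at hlt
  set w := z - y with hw
  have hwu : 2 * r * ⟪u, w⟫ < ‖w‖ ^ 2 := by
    have e : y + r • u - z = r • u - w := by rw [hw]; abel
    rw [e] at hlt
    have h2 : r ^ 2 < ‖r • u - w‖ ^ 2 := pow_lt_pow_left₀ hlt hr.le two_ne_zero
    rw [norm_sub_sq_real, norm_smul, hu, real_inner_smul_left, mul_one, Real.norm_eq_abs,
      sq_abs] at h2
    linarith
  have hwu0 : 0 ≤ ⟪u, w⟫ := by
    rw [hw, inner_sub_right]; linarith [hmin z hz]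
  have hw2 : 0 < ‖w‖ ^ 2 := by nlinarith [mul_nonneg hr.le hwu0]
  obtain ⟨s, hs0, hs1, hs⟩ : ∃ s : ℝ, 0 < s ∧ s < 1 ∧ 2 * r * ⟪u, w⟫ < (1 - s) * ‖w‖ ^ 2 := by
    refine ⟨(‖w‖ ^ 2 - 2 * r * ⟪u, w⟫) / (2 * ‖w‖ ^ 2), ?_, ?_, ?_⟩
    · apply div_pos <;> linarith
    · rw [div_lt_one (by positivity)]
      nlinarith [mul_nonneg hr.le hwu0]
    · have : (1 - (‖w‖ ^ 2 - 2 * r * ⟪u, w⟫) / (2 * ‖w‖ ^ 2)) * ‖w‖ ^ 2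
        = (‖w‖ ^ 2 + 2 * r * ⟪u, w⟫) / 2 := by
        generalize ‖w‖ ^ 2 = q at hw2
        have hq := hw2.ne'
        field_simp; ring
      rw [this]; linarith
  set δ := s * (1 - s) * ‖w‖ ^ 2 with hδ
  have hδ0 : 0 < δ := by have : 0 < 1 - s := by linarith
                         positivity
  have hmem : y + s • w - (δ / (2 * r)) • u ∈ ballBody r P := by
    rw [mem_ballBody'] at hy hz ⊢
    intro c hc
    have h1 := hy c hc
    have h2 := hz c hc
    have e : ‖(y - c) + s • w‖ ^ 2 = (1 - s) * ‖y - c‖ ^ 2 + s * ‖z - c‖ ^ 2 - δ := by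
      have hzc : z - c = (y - c) + w := by rw [hw]; abel
      rw [hzc, norm_add_sq_real, norm_add_sq_real, norm_smul, real_inner_smul_right, mul_pow,
        Real.norm_eq_abs, sq_abs, hδ]
      ring
    have e2 : ‖(y - c) + s • w‖ ^ 2 ≤ r ^ 2 - δ := by
      rw [e]
      have a1 := pow_le_pow_left₀ (norm_nonneg _) h1 2
      have a2 := pow_le_pow_left₀ (norm_nonneg _) h2 2
      nlinarith
    have hδr : δ ≤ r ^ 2 := by nlinarith [sq_nonneg ‖(y - c) + s • w‖]
    have e3 : ‖(y - c) + s • w‖ ≤ r - δ / (2 * r) := by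
      apply le_of_sq_le_sq
      · have : (r - δ / (2 * r)) ^ 2 = r ^ 2 - δ + (δ / (2 * r)) ^ 2 := by field_simp; ring
        rw [this]
        nlinarith [sq_nonneg (δ / (2 * r))]
      · rw [sub_nonneg, div_le_iff₀ (by positivity)]
        nlinarith
    have e4 : y + s • w - (δ / (2 * r)) • u - c = ((y - c) + s • w) - (δ / (2 * r)) • u := by abel
    rw [e4]
    have e5 : ‖(δ / (2 * r)) • u‖ = δ / (2 * r) := by
      rw [norm_smul, hu, mul_one, Real.norm_of_nonneg (by positivity)]
    have := norm_sub_le ((y - c) + s • w) ((δ / (2 * r)) • u)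
    linarith
  have := hmin _ hmem
  rw [inner_sub_right, inner_add_right, real_inner_smul_right, real_inner_smul_right,
    real_inner_self_eq_norm_sq, hu] at this
  have h3 : δ / (2 * r) ≤ s * ⟪u, w⟫ := by linarith
  rw [div_le_iff₀ (by positivity)] at h3
  have h4 : s * (2 * r * ⟪u, w⟫) < s * ((1 - s) * ‖w‖ ^ 2) := mul_lt_mul_of_pos_left hs hs0
  rw [hδ] at h3
  linarith

theorem supp_eq_of (K : Set Pl) (u : Pl) (c : ℝ) (a : Pl) (ha : a ∈ K) (h1 : ⟪u, a⟫ = c)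
    (h2 : ∀ x ∈ K, ⟪u, x⟫ ≤ c) : supp K u = c :=
  IsGreatest.csSup_eq ⟨⟨a, ha, h1⟩, by rintro _ ⟨x, hx, rfl⟩; exact h2 x hx⟩

/-- In the plane, V₁(B[o,r]) = V₁(conv_r P) + V₁(P^r). -/
theorem first_intrinsic_volume_decomposition (r r₀ : ℝ) (hr : r₀ < r) (hr₀ : 0 < r₀)
    (P : Set (EuclideanSpace ℝ (Fin 2))) (hPfin : P.Finite) (hPne : P.Nonempty)
    (hcr : IsLeast {ρ : ℝ | ∃ cc : EuclideanSpace ℝ (Fin 2), P ⊆ closedBall cc ρ} r₀)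
    (hhull : (ballHull r P).Nonempty)
    (V : ℕ → Set (EuclideanSpace ℝ (Fin 2)) → ℝ) (hV : IsIntrinsicVolumes 2 V) :
    V 1 (closedBall (0 : EuclideanSpace ℝ (Fin 2)) r) =
      V 1 (ballHull r P) + V 1 (ballBody r P) := by
  have hrpos : 0 < r := hr₀.trans hr
  have hBne : (ballBody r P).Nonempty := by
    obtain ⟨cc, hcc⟩ := hcr.1
    refine ⟨cc, mem_ballBody'.2 fun x hx => ?_⟩
    have := hcc hx
    rw [mem_closedBall, dist_eq_norm, norm_sub_rev] at this
    linarith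
  have hBc := ballBody_compact r P hPne
  rw [ballHull_eq] at hhull ⊢
  have hAc := ballBody_compact r _ hBne
  have hsphere : ∀ u : sphere (0 : Pl) 1, ‖(u : Pl)‖ = 1 := fun u => by simp
  set B := ballBody r P with hB
  set A := ballBody r B with hA
  have sball : ∀ u : sphere (0 : Pl) 1, supp (closedBall 0 r) u = r := by
    intro u
    apply supp_eq_of _ _ _ (r • (u : Pl))
    · simp [norm_smul, abs_of_pos hrpos]
    · rw [real_inner_smul_right, real_inner_self_eq_norm_sq, hsphere]; simp
    · intro x hx
      have := real_inner_le_norm (u : Pl) x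
      rw [hsphere, one_mul] at this
      exact this.trans (mem_closedBall_zero_iff.1 hx)
  have ssum : ∀ u : sphere (0 : Pl) 1, supp (closedBall 0 r) u = supp A u + supp (-B) u := by
    intro u
    rw [sball]
    obtain ⟨b, hb, h1, h2⟩ := supp_attained (-B) hBc.neg hBne.neg u
    have hmin : ∀ z ∈ B, ⟪(u : Pl), -b⟫ ≤ ⟪(u : Pl), z⟫ := by
      intro z hz
      have := h2 (-z) (by simpa using hz)
      rw [inner_neg_right] at this ⊢
      linarith
    have hmem := support_ball r hrpos P u (-b) (hsphere u) hb hmin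
    have : supp A u = r - supp (-B) u := by
      apply supp_eq_of _ _ _ _ hmem
      · rw [inner_add_right, inner_neg_right, h1, real_inner_smul_right,
          real_inner_self_eq_norm_sq, hsphere]
        ring
      · intro x hx
        have h3 := mem_ballBody'.1 hx (-b) hb
        have h4 := real_inner_le_norm (u : Pl) (x - -b)
        rw [hsphere, one_mul, sub_neg_eq_add, inner_add_right, h1] at h4
        rw [sub_neg_eq_add] at h3
        linarith
    rw [this]; ring
  have hvolneg : ∀ ε : ℝ, 0 < ε → volume (B + ε • closedBall (0 : Pl) 1) =
      volume (-B + ε • closedBall (0 : Pl) 1) := by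
    intro ε hε
    rw [← Measure.measure_neg, neg_add, smul_unitClosedBall_of_nonneg hε.le, neg_closedBall,
      neg_zero]
  have f1 := V1_eq V hV (closedBall 0 r) (closedBall 0 r) (convex_closedBall _ _)
    (isCompact_closedBall _ _) ⟨0, by simp [hrpos.le]⟩ (isCompact_closedBall _ _)
    ⟨0, by simp [hrpos.le]⟩ (fun _ _ => rfl)
  have f2 := V1_eq V hV A A (ballBody_convex _ _) hAc hhull hAc hhull (fun _ _ => rfl)
  have f3 := V1_eq V hV B (-B) (ballBody_convex _ _) hBc hBne hBc.neg hBne.neg hvolneg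
  have hint : ∀ K : Set Pl, IsCompact K → Integrable (fun u : sphere (0 : Pl) 1 => supp K u)
      (volume : Measure Pl).toSphere := fun K hK =>
    ((supp_cont K hK).comp continuous_subtype_val).integrable_of_hasCompactSupport
      (HasCompactSupport.of_compactSpace _)
  simp_rw [ssum] at f1
  rw [integral_add (hint A hAc) (hint (-B) hBc.neg), ← f2, ← f3, ← mul_add] at f1
  refine mul_left_cancel₀ ?_ f1
  unfold unitBallVol
  exact (ENNReal.toReal_pos (measure_closedBall_pos _ _ one_pos).ne'
    measure_closedBall_lt_top.ne).ne'
end
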